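/- arXiv:1203.3187 — 2 statements merged into one kernel-verified Lean document; each statement's English description precedes it below -/
import Mathlib

section
/- For every integer n ≥ 2, the opposite-boundary doubly-refined ASM generating function with bulk parameters related by y = x+1 satisfies: Zopp_n(x,x+1;z1,z2) = (x·z1·z2 + 1)·((x·z1+1)(x·z2+1))^{n−2}·(x+1)^{(n−2)(n−3)/2}, as an identity of polynomials in ℤ[x,z1,z2]. -/
open Finset

/-- The `n × n` integer matrix encoded by `e`, with entries in `{-1, 0, 1}`. -/
def asmMat {n : ℕ} (e : Fin n → Fin n → Fin 3) : Fin n → Fin n → ℤ :=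
  fun i j => (e i j : ℤ) - 1

/-- `A` is an alternating sign matrix: all entries lie in `{-1, 0, 1}`, every
partial row sum and every partial column sum is `0` or `1` (equivalently, the
nonzero entries of each row and of each column alternate in sign), and every
complete row sum and column sum is `1`. -/
def IsASM {n : ℕ} (A : Fin n → Fin n → ℤ) : Prop :=
  (∀ i j, A i j = -1 ∨ A i j = 0 ∨ A i j = 1) ∧
  (∀ (i j : Fin n), (∑ j' ∈ univ.filter (fun j' : Fin n => j' ≤ j), A i j') = 0 ∨
    (∑ j' ∈ univ.filter (fun j' : Fin n => j' ≤ j), A i j') = 1) ∧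
  (∀ (i j : Fin n), (∑ i' ∈ univ.filter (fun i' : Fin n => i' ≤ i), A i' j) = 0 ∨
    (∑ i' ∈ univ.filter (fun i' : Fin n => i' ≤ i), A i' j) = 1) ∧
  (∀ i : Fin n, (∑ j, A i j) = 1) ∧
  (∀ j : Fin n, (∑ i, A i j) = 1)

/-- `ν(A)`, the number of generalized inversions of `A`. -/
def nuASM {n : ℕ} (A : Fin n → Fin n → ℤ) : ℕ :=
  (∑ i : Fin n, ∑ i' : Fin n, ∑ j : Fin n, ∑ j' : Fin n,
      if i < i' ∧ j' ≤ j then A i j * A i' j' else 0).toNat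

/-- `μ(A)`, the number of entries of `A` equal to `-1`. -/
def muASM {n : ℕ} (A : Fin n → Fin n → ℤ) : ℕ :=
  (univ.filter (fun p : Fin n × Fin n => A p.1 p.2 = -1)).card

/-- `ρT(A)`, the number of `0`'s to the left of the `1` in the top row of `A`. -/
def rhoT {n : ℕ} (A : Fin n → Fin n → ℤ) : ℕ :=
  (univ.filter (fun j : Fin n =>
    A ⟨0, j.pos⟩ j = 0 ∧ ∃ j' : Fin n, j < j' ∧ A ⟨0, j.pos⟩ j' = 1)).card

/-- `ρR(A)`, the number of `0`'s below the `1` in the right-most column of `A`. -/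
def rhoR {n : ℕ} (A : Fin n → Fin n → ℤ) : ℕ :=
  (univ.filter (fun i : Fin n =>
    A i ⟨n - 1, Nat.sub_lt i.pos Nat.one_pos⟩ = 0 ∧
      ∃ i' : Fin n, i' < i ∧ A i' ⟨n - 1, Nat.sub_lt i.pos Nat.one_pos⟩ = 1)).card

/-- `ρB(A)`, the number of `0`'s to the right of the `1` in the bottom row of `A`. -/
def rhoB {n : ℕ} (A : Fin n → Fin n → ℤ) : ℕ :=
  (univ.filter (fun j : Fin n =>
    A ⟨n - 1, Nat.sub_lt j.pos Nat.one_pos⟩ j = 0 ∧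
      ∃ j' : Fin n, j' < j ∧ A ⟨n - 1, Nat.sub_lt j.pos Nat.one_pos⟩ j' = 1)).card

/-- `ρL(A)`, the number of `0`'s above the `1` in the left-most column of `A`. -/
def rhoL {n : ℕ} (A : Fin n → Fin n → ℤ) : ℕ :=
  (univ.filter (fun i : Fin n =>
    A i ⟨0, i.pos⟩ = 0 ∧ ∃ i' : Fin n, i < i' ∧ A i' ⟨0, i.pos⟩ = 1)).card

open Classical in
/-- The quadruply-refined ASM generating function
`Zqua_n(x,y;z1,z2,z3,z4) = Σ_A x^{ν(A)} y^{μ(A)} z1^{ρT(A)} z2^{ρR(A)} z3^{ρB(A)} z4^{ρL(A)}`. -/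
noncomputable def Zqua (n : ℕ) {R : Type*} [CommRing R] (x y z1 z2 z3 z4 : R) : R :=
  ∑ e : Fin n → Fin n → Fin 3,
    if IsASM (asmMat e) then
      x ^ nuASM (asmMat e) * y ^ muASM (asmMat e) * z1 ^ rhoT (asmMat e) *
        z2 ^ rhoR (asmMat e) * z3 ^ rhoB (asmMat e) * z4 ^ rhoL (asmMat e)
    else 0

/-- Adjacent-boundary doubly-refined generating function `Zadj_n(x,y;z1,z2)`. -/
noncomputable def Zadj (n : ℕ) {R : Type*} [CommRing R] (x y z1 z2 : R) : R :=
  Zqua n x y z1 1 1 z2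

/-- Alternative adjacent-boundary doubly-refined generating function `Zbaradj_n(x,y;z1,z2)`. -/
noncomputable def Zbaradj (n : ℕ) {R : Type*} [CommRing R] (x y z1 z2 : R) : R :=
  Zqua n x y z1 z2 1 1

/-- Triply-refined generating function `Ztri_n(x,y;z1,z2,z3)`. -/
noncomputable def Ztri (n : ℕ) {R : Type*} [CommRing R] (x y z1 z2 z3 : R) : R :=
  Zqua n x y z1 1 z2 z3

/-- Opposite-boundary doubly-refined generating function `Zopp_n(x,y;z1,z2)`. -/
noncomputable def Zopp (n : ℕ) {R : Type*} [CommRing R] (x y z1 z2 : R) : R :=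
  Zqua n x y z1 1 z2 1

/-- Singly-refined generating function `Z_n(x,y;z)`. -/
noncomputable def Zsing (n : ℕ) {R : Type*} [CommRing R] (x y z : R) : R :=
  Zqua n x y z 1 1 1

/-- Unrefined generating function `Z_n(x,y)`.  Note `Zun 0 x y = 1`. -/
noncomputable def Zun (n : ℕ) {R : Type*} [CommRing R] (x y : R) : R :=
  Zqua n x y 1 1 1 1

/-!
Refine the count of alternating sign matrices with `y = x + 1` by giving every row `r`, with index
`i`, the further weight `v i ^ (∑ j, r j * j) * w i ^ (∑ j, r j * (n - 1 - j))`. The function with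
opposite boundaries is the case where all variables but `v 0` and `w (n - 1)` are `1`. The refined
sum is given by Tokuyama's formula: it is `∏ i < j, (v j * w i + x * v i * w j)`.

The partial column sums of an alternating sign matrix are the indicators of the rows of a monotone
triangle. By induction on `k`, the generating function of the stacks of `k` rows with column sums
the indicator of `s`, times the Vandermonde determinant of `v` and `w`, is the product above times
the generalized Vandermonde determinant with the columns `s`. In the step, the sum over the rows
interlacing with `s` is a sum of determinants taken column by column; up to a factor each column
telescopes to a difference of two columns, as left by clearing the last row of the larger
determinant. When `s` consists of all columns, both sides contain the same Vandermonde determinant,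
which is cancelled for indeterminate `v` and `w`.
-/

section Determinants

variable {R : Type*} [CommRing R]

lemma sum_piFinset_prod_mul_det {m ι : Type*} [DecidableEq m] [Fintype m] (I : m → Finset ι)
    (c : m → ι → R) (M : Matrix m ι R) :
    ∑ t ∈ Fintype.piFinset I, (∏ b, c b (t b)) * (M.submatrix id t).det =
      (Matrix.of fun a b ↦ ∑ t ∈ I b, c b t * M a t).det := by
  simp only [Matrix.det_apply', Matrix.of_apply, Matrix.submatrix_apply, id, mul_sum,
    prod_univ_sum]
  rw [sum_comm]
  refine sum_congr rfl fun σ _ ↦ sum_congr rfl fun t _ ↦ ?_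
  rw [prod_mul_distrib]
  ring

/-- The matrix of the column operations that clear the last row of a matrix whose consecutive
entries there are in the ratios `β b : α b`. -/
def clearingMatrix {k : ℕ} (α β : Fin k → R) : Matrix (Fin (k + 1)) (Fin (k + 1)) R :=
  Matrix.of fun i ↦ Fin.cons (if i = 0 then 1 else 0) fun b ↦
    (if i = b.castSucc then α b else 0) - if i = b.succ then β b else 0

lemma det_clearingMatrix {k : ℕ} (α β : Fin k → R) :
    (clearingMatrix α β).det = (-1) ^ k * ∏ b, β b := by
  rw [Matrix.det_of_isUpperTriangular, Fin.prod_univ_succ]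
  · simp [clearingMatrix, (Fin.castSucc_lt_succ).ne', prod_neg]
  · intro i j hij
    cases j using Fin.cases with
    | zero => simp [clearingMatrix, (show 0 < i from hij).ne']
    | succ b =>
      have hb : b.succ < i := hij
      simp [clearingMatrix, hb.ne', (Fin.castSucc_lt_succ.trans hb).ne']

lemma mul_clearingMatrix_zero {k : ℕ} (M : Matrix (Fin (k + 1)) (Fin (k + 1)) R)
    (α β : Fin k → R) (a : Fin (k + 1)) : (M * clearingMatrix α β) a 0 = M a 0 := by
  simp [Matrix.mul_apply, clearingMatrix]

lemma mul_clearingMatrix_succ {k : ℕ} (M : Matrix (Fin (k + 1)) (Fin (k + 1)) R)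
    (α β : Fin k → R) (a : Fin (k + 1)) (b : Fin k) :
    (M * clearingMatrix α β) a b.succ = α b * M a b.castSucc - β b * M a b.succ := by
  simp [Matrix.mul_apply, clearingMatrix, mul_sub, sum_sub_distrib, mul_comm]

lemma prod_mul_det_of_last_row_proportional {k : ℕ} (M : Matrix (Fin (k + 1)) (Fin (k + 1)) R)
    (α β : Fin k → R)
    (h : ∀ b, α b * M (Fin.last k) b.castSucc = β b * M (Fin.last k) b.succ) :
    (∏ b, β b) * M.det = M (Fin.last k) 0 *
      (Matrix.of fun a b ↦ α b * M a.castSucc b.castSucc - β b * M a.castSucc b.succ).det := by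
  have hdet : (M * clearingMatrix α β).det = (-1) ^ k * (M (Fin.last k) 0 *
      (Matrix.of fun a b ↦ α b * M a.castSucc b.castSucc - β b * M a.castSucc b.succ).det) := by
    rw [Matrix.det_succ_row _ (Fin.last k), Fin.sum_univ_succ, sum_eq_zero]
    · simp only [mul_clearingMatrix_zero, Fin.succAbove_last, Fin.succAbove_zero,
        Fin.val_last, Fin.val_zero, add_zero, mul_assoc]
      congr 3
      ext a b
      simp [mul_clearingMatrix_succ]
    · intro b _
      simp [mul_clearingMatrix_succ, h]
  rw [Matrix.det_mul, det_clearingMatrix] at hdet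
  refine (IsUnit.neg isUnit_one |>.pow k).mul_left_cancel ?_
  rw [← hdet]
  ring

end Determinants

section LambdaVandermonde

variable {R : Type*} [CommRing R]

/-- The `x`-determinant, in the sense of Robbins and Rumsey, of the projective Vandermonde matrix
of `v` and `w`, which they show to be this product; the ordinary determinant is the case
`x = -1`. -/
def lambdaVandermonde {k : ℕ} (x : R) (v w : Fin k → R) : R :=
  ∏ i, ∏ j ∈ Ioi i, (v j * w i + x * (v i * w j))

lemma lambdaVandermonde_neg_one {k : ℕ} (v w : Fin k → R) :
    lambdaVandermonde (-1) v w = (Matrix.projVandermonde v w).det := by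
  simp only [lambdaVandermonde, Matrix.det_projVandermonde, neg_one_mul, sub_eq_add_neg]

lemma lambdaVandermonde_castSucc {k : ℕ} (x : R) (v w : Fin (k + 1) → R) :
    lambdaVandermonde x v w = lambdaVandermonde x (v ∘ Fin.castSucc) (w ∘ Fin.castSucc) *
      ∏ i : Fin k, (v (Fin.last k) * w i.castSucc + x * (v i.castSucc * w (Fin.last k))) := by
  have prod_Iio {m : ℕ} (v w : Fin m → R) :
      lambdaVandermonde x v w = ∏ j, ∏ i ∈ Iio j, (v j * w i + x * (v i * w j)) :=
    prod_comm' (by simp)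
  simp [prod_Iio, Fin.prod_univ_castSucc, Fin.prod_Iio_castSucc, Fin.Iio_last_eq_map]

lemma lambdaVandermonde_succ {k : ℕ} (x : R) (v w : Fin (k + 1) → R) :
    lambdaVandermonde x v w =
      (∏ j : Fin k, (v j.succ * w 0 + x * (v 0 * w j.succ))) *
        lambdaVandermonde x (v ∘ Fin.succ) (w ∘ Fin.succ) := by
  simp [lambdaVandermonde, Fin.prod_univ_succ]

lemma lambdaVandermonde_one {k : ℕ} (x : R) :
    lambdaVandermonde x (1 : Fin k → R) 1 = (1 + x) ^ (k * (k - 1) / 2) := by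
  simp [lambdaVandermonde, prod_pow_eq_pow_sum, Fin.sum_univ_eq_sum_range (fun i ↦ k - 1 - i),
    sum_range_reflect (fun i ↦ i), sum_range_id]

lemma lambdaVandermonde_mulSingle {m : ℕ} (x a b : R) :
    lambdaVandermonde x (Pi.mulSingle (0 : Fin (m + 2)) a) (Pi.mulSingle (Fin.last (m + 1)) b) =
      (x * a * b + 1) * ((x * a + 1) * (x * b + 1)) ^ m * (x + 1) ^ (m * (m - 1) / 2) := by
  have htop : (Pi.mulSingle (0 : Fin (m + 2)) a ∘ Fin.castSucc) ∘ Fin.succ = (1 : Fin m → R) := by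
    ext i; simp
  have hbot : (Pi.mulSingle (Fin.last (m + 1)) b ∘ Fin.castSucc) ∘ Fin.succ =
      (1 : Fin m → R) := by
    ext i; simp [← Fin.succ_last]
  rw [lambdaVandermonde_castSucc, lambdaVandermonde_succ, htop, hbot, lambdaVandermonde_one,
    Fin.prod_univ_succ]
  simp [Fin.castSucc_ne_last, mul_pow]
  ring

lemma map_lambdaVandermonde {S : Type*} [CommRing S] (f : R →+* S) {k : ℕ} (x : R)
    (v w : Fin k → R) :
    f (lambdaVandermonde x v w) = lambdaVandermonde (f x) (f ∘ v) (f ∘ w) := by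
  simp [lambdaVandermonde]

/-- Tokuyama's weight of an entry `t` of a monotone triangle below the consecutive entries
`a < b`. -/
def entryWeight {α : Type*} [DecidableEq α] (x : R) (a b t : α) : R :=
  if t = b then x else if t = a then 1 else x + 1

lemma sum_Icc_entryWeight_mul (x : R) (f : ℕ → R) {a b : ℕ} (h : a < b) :
    ∑ t ∈ Icc a b, entryWeight x a b t * f t = ∑ t ∈ Ico a b, (f t + x * f (t + 1)) := by
  have hinner : ∑ t ∈ Ico (a + 1) b, entryWeight x a b t * f t =
      (x + 1) * ∑ t ∈ Ico (a + 1) b, f t := by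
    rw [mul_sum]
    refine sum_congr rfl fun t ht ↦ ?_
    rw [mem_Ico] at ht
    rw [entryWeight, if_neg ht.2.ne, if_neg (by lia)]
  rw [sum_add_distrib, ← mul_sum, sum_Ico_add' f, ← Ico_add_one_right_eq_Icc,
    sum_Ico_succ_top h.le, sum_Ico_succ_top (by lia : a + 1 ≤ b), sum_eq_sum_Ico_succ_bot h,
    sum_eq_sum_Ico_succ_bot h, hinner, entryWeight, entryWeight, if_pos rfl, if_neg h.ne,
    if_pos rfl]
  ring

lemma sub_mul_sum_Icc_entryWeight (x p q : R) (f : ℕ → R) {a b : ℕ} (h : a < b)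
    (hf : ∀ t ∈ Ico a b, p * f (t + 1) = q * f t) :
    (p - q) * ∑ t ∈ Icc a b, entryWeight x a b t * f t = (p + x * q) * (f a - f b) := by
  have htelescope : ∑ t ∈ Ico a b, (f t - f (t + 1)) = f a - f b := by
    rw [← neg_inj, ← sum_neg_distrib, neg_sub, ← sum_Ico_sub f h.le]
    simp only [neg_sub]
  rw [sum_Icc_entryWeight_mul x f h, ← htelescope, mul_sum, mul_sum]
  refine sum_congr rfl fun t ht ↦ ?_
  linear_combination (1 + x) * hf t ht

lemma sub_mul_sum_Icc_entryWeight_monomial (x y q z u : R) {n : ℕ} {a b : Fin n} (h : a < b) :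
    (z * q - y * u) * ∑ t ∈ Icc a b, entryWeight x a b t *
        (z ^ ((b : ℕ) - t) * u ^ ((t : ℕ) - a)) * (y ^ (t : ℕ) * q ^ (t.rev : ℕ)) =
      (z * q + x * (y * u)) * (z ^ ((b : ℕ) - a) * (y ^ (a : ℕ) * q ^ (a.rev : ℕ)) -
        u ^ ((b : ℕ) - a) * (y ^ (b : ℕ) * q ^ (b.rev : ℕ))) := by
  let f : ℕ → R := fun t ↦ z ^ ((b : ℕ) - t) * u ^ (t - (a : ℕ)) * (y ^ t * q ^ (n - (t + 1)))
  have hf : ∀ t ∈ Ico (a : ℕ) b, z * q * f (t + 1) = y * u * f t := by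
    intro t ht
    rw [mem_Ico] at ht
    simp only [f]
    rw [show (b : ℕ) - t = b - (t + 1) + 1 by lia, show t + 1 - (a : ℕ) = t - a + 1 by lia,
      show n - (t + 1) = n - (t + 1 + 1) + 1 by lia]
    ring
  have hsum : ∑ t ∈ Icc a b, entryWeight x a b t *
        (z ^ ((b : ℕ) - t) * u ^ ((t : ℕ) - a)) * (y ^ (t : ℕ) * q ^ (t.rev : ℕ)) =
      ∑ t ∈ Icc (a : ℕ) b, entryWeight x (a : ℕ) b t * f t := by
    rw [← Fin.map_valEmbedding_Icc, sum_map]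
    simp [f, entryWeight, Fin.ext_iff, Fin.val_rev, mul_assoc]
  rw [hsum, sub_mul_sum_Icc_entryWeight x _ _ f h hf]
  simp [f, Fin.val_rev]

lemma prod_pow_sub_castSucc_mul_pow_rev_last {k n : ℕ} (u : R) {s : Fin (k + 1) → Fin n}
    (hs : Monotone s) :
    (∏ b : Fin k, u ^ ((s b.succ : ℕ) - s b.castSucc)) * u ^ ((s (Fin.last k)).rev : ℕ) =
      u ^ ((s 0).rev : ℕ) := by
  have hstep (b : Fin k) : (s b.castSucc : ℕ) ≤ s b.succ := hs (Fin.castSucc_le_succ b)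
  have hsplit := (Fin.sum_univ_succ fun i ↦ (s i : ℕ)).symm.trans (Fin.sum_univ_castSucc _)
  have hle : ∑ b : Fin k, (s b.castSucc : ℕ) ≤ ∑ b : Fin k, (s b.succ : ℕ) :=
    sum_le_sum fun b _ ↦ hstep b
  rw [prod_pow_eq_pow_sum, ← pow_add, sum_tsub_distrib _ fun b _ ↦ hstep b, Fin.val_rev,
    Fin.val_rev]
  congr 1
  lia

open Matrix nonZeroDivisors

lemma det_rectVandermonde_submatrix_succ {k n : ℕ} (v w : Fin (k + 1) → R)
    (hw : w (Fin.last k) ∈ R⁰) (s : Fin (k + 1) ↪o Fin n) :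
    ((rectVandermonde v w n).submatrix id s).det =
      v (Fin.last k) ^ (s 0 : ℕ) * w (Fin.last k) ^ ((s (Fin.last k)).rev : ℕ) *
        (of fun a b : Fin k ↦
          v (Fin.last k) ^ ((s b.succ : ℕ) - s b.castSucc) *
              (rectVandermonde v w n) a.castSucc (s b.castSucc) -
            w (Fin.last k) ^ ((s b.succ : ℕ) - s b.castSucc) *
              (rectVandermonde v w n) a.castSucc (s b.succ)).det := by
  set z := v (Fin.last k) with hz
  set u := w (Fin.last k) with hu
  have hclear := prod_mul_det_of_last_row_proportional
    ((rectVandermonde v w n).submatrix id s)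
    (fun b ↦ z ^ ((s b.succ : ℕ) - s b.castSucc)) (fun b ↦ u ^ ((s b.succ : ℕ) - s b.castSucc))
    (fun b ↦ by
      have hlt : (s b.castSucc : ℕ) < s b.succ := s.strictMono Fin.castSucc_lt_succ
      obtain ⟨d, hd⟩ := Nat.exists_eq_add_of_le hlt.le
      have hrev : ((s b.castSucc).rev : ℕ) = d + (s b.succ).rev := by
        rw [Fin.val_rev, Fin.val_rev]
        lia
      simp only [submatrix_apply, id, rectVandermonde_apply, ← hz, ← hu, hrev, hd,
        Nat.add_sub_cancel_left]
      ring)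
  refine (mul_cancel_left_mem_nonZeroDivisors
    (Submonoid.prod_mem _ fun b _ ↦ pow_mem hw _)).1 (hclear.trans ?_)
  simp only [submatrix_apply, id, rectVandermonde_apply, ← hz, ← hu]
  rw [← prod_pow_sub_castSucc_mul_pow_rev_last u s.monotone]
  ring

/-- The total weight, as a function of its bottom two rows `s` and `t`, of the bottom row of an
array of rows counted by monotone triangles. -/
def stepWeight {k n : ℕ} (x z u : R) (s : Fin (k + 1) → Fin n) (t : Fin k → Fin n) : R :=
  z ^ (s 0 : ℕ) * u ^ ((s (Fin.last k)).rev : ℕ) *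
    ∏ i, entryWeight x (s i.castSucc) (s i.succ) (t i) *
      (z ^ ((s i.succ : ℕ) - t i) * u ^ ((t i : ℕ) - s i.castSucc))

/-- The sequences interlacing with `s`, which are the possible rows above `s` in a Gelfand–Tsetlin
pattern. -/
def interlacing {k n : ℕ} (s : Fin (k + 1) → Fin n) : Finset (Fin k → Fin n) :=
  Fintype.piFinset fun i ↦ Icc (s i.castSucc) (s i.succ)

lemma prod_mul_sum_interlacing_mul_det {k n : ℕ} (x : R) (v w : Fin (k + 1) → R)
    (hw : w (Fin.last k) ∈ R⁰) (s : Fin (k + 1) ↪o Fin n) :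
    (∏ i : Fin k, (v (Fin.last k) * w i.castSucc - v i.castSucc * w (Fin.last k))) *
        ∑ t ∈ interlacing s, stepWeight x (v (Fin.last k)) (w (Fin.last k)) s t *
          ((rectVandermonde (v ∘ Fin.castSucc) (w ∘ Fin.castSucc) n).submatrix id t).det =
      (∏ i : Fin k, (v (Fin.last k) * w i.castSucc + x * (v i.castSucc * w (Fin.last k)))) *
        ((rectVandermonde v w n).submatrix id s).det := by
  simp only [stepWeight, mul_assoc (_ * _) (∏ _, _) (det _), ← mul_sum, interlacing]
  rw [sum_piFinset_prod_mul_det _ (fun (i : Fin k) (t : Fin n) ↦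
      entryWeight x (s i.castSucc) (s i.succ) t *
        (v (Fin.last k) ^ ((s i.succ : ℕ) - t) * w (Fin.last k) ^ ((t : ℕ) - s i.castSucc))),
    det_rectVandermonde_submatrix_succ v w hw s, mul_left_comm, mul_left_comm (∏ i, _),
    ← det_mul_column, ← det_mul_column]
  congr 2
  ext a b
  simp only [of_apply, rectVandermonde_apply, Function.comp_apply]
  exact sub_mul_sum_Icc_entryWeight_monomial x _ _ _ _ (s.strictMono Fin.castSucc_lt_succ)

end LambdaVandermonde

section Rows

variable {k n : ℕ}

/-- The row with entries `1` in the columns of `s` and `0` elsewhere. -/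
noncomputable def indicatorRow (s : Fin k ↪o Fin n) : Fin n → ℤ :=
  (Set.range s).indicator 1

lemma indicatorRow_injective : Function.Injective (indicatorRow (k := k) (n := n)) :=
  fun s t h ↦ DFunLike.coe_injective <|
    (s.strictMono.range_inj t.strictMono).1 (Set.indicator_one_inj ℤ h)

lemma indicatorRow_eq_zero_or_one (s : Fin k ↪o Fin n) (j : Fin n) :
    indicatorRow s j = 0 ∨ indicatorRow s j = 1 :=
  Set.indicator_eq_zero_or_self _ _ _

lemma exists_indicatorRow_eq {c : Fin n → ℤ} (hc : ∀ j, c j = 0 ∨ c j = 1)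
    (hk : ∑ j, c j = k) : ∃ s : Fin k ↪o Fin n, indicatorRow s = c := by
  have hcard : #{j | c j = 1} = k := by
    rw [← Nat.cast_inj (R := ℤ), ← hk, natCast_card_filter]
    refine sum_congr rfl fun j _ ↦ ?_
    rcases hc j with h | h <;> simp [h]
  refine ⟨orderEmbOfFin _ hcard, ?_⟩
  ext j
  rcases hc j with h | h <;> simp [indicatorRow, h]

lemma sum_indicatorRow_mul (s : Fin k ↪o Fin n) (f : Fin n → ℤ) :
    ∑ j, indicatorRow s j * f j = ∑ i, f (s i) :=
  (Fintype.sum_of_injective s s.injective _ _ (fun j hj ↦ by simp [indicatorRow, hj])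
    fun i ↦ by simp [indicatorRow]).symm

lemma sum_indicatorRow (s : Fin k ↪o Fin n) : ∑ j, indicatorRow s j = k := by
  simpa using sum_indicatorRow_mul s 1

lemma sum_Iic_indicatorRow (s : Fin k ↪o Fin n) (j : Fin n) :
    ∑ l ∈ Iic j, indicatorRow s l = #{i | s i ≤ j} := by
  have h := sum_indicatorRow_mul s fun l ↦ if l ≤ j then 1 else 0
  simpa [← sum_filter, filter_ge_eq_Iic] using h

lemma lt_card_filter_le_iff (s : Fin k ↪o Fin n) (i : Fin k) (j : Fin n) :
    (i : ℕ) < #{a | s a ≤ j} ↔ s i ≤ j := by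
  constructor
  · contrapose!
    intro hij
    rw [← Fin.card_Iio]
    exact card_le_card fun a ha ↦ by
      simpa using s.lt_iff_lt.1 ((mem_filter.1 ha).2.trans_lt hij)
  · intro hij
    rw [← Nat.add_one_le_iff, ← Fin.card_Iic]
    exact card_le_card fun a ha ↦ by
      simpa using (s.monotone (mem_Iic.1 ha)).trans hij

lemma mem_interlacing {s : Fin (k + 1) → Fin n} {t : Fin k → Fin n} :
    t ∈ interlacing s ↔ ∀ i, s i.castSucc ≤ t i ∧ t i ≤ s i.succ := by
  simp [interlacing]

lemma mem_interlacing_iff_card {s : Fin (k + 1) ↪o Fin n} {t : Fin k ↪o Fin n} :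
    ⇑t ∈ interlacing s ↔
      ∀ j, #{i | t i ≤ j} ≤ #{i | s i ≤ j} ∧ #{i | s i ≤ j} ≤ #{i | t i ≤ j} + 1 := by
  rw [mem_interlacing]
  constructor
  · refine fun h j ↦ ⟨?_, ?_⟩ <;> by_contra! hlt
    · have hk : #{i | t i ≤ j} ≤ k := card_finset_fin_le _
      let i : Fin k := ⟨#{i | s i ≤ j}, hlt.trans_le hk⟩
      have ht : t i ≤ j := (lt_card_filter_le_iff t i j).1 hlt
      exact lt_irrefl _ ((lt_card_filter_le_iff s i.castSucc j).2 ((h i).1.trans ht))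
    · have hk : #{i | s i ≤ j} ≤ k + 1 := card_finset_fin_le _
      let i : Fin k := ⟨#{i | t i ≤ j}, by lia⟩
      have hs : s i.succ ≤ j := (lt_card_filter_le_iff s i.succ j).1 hlt
      exact lt_irrefl _ ((lt_card_filter_le_iff t i j).2 ((h i).2.trans hs))
  · refine fun h i ↦ ⟨?_, ?_⟩
    · rw [← lt_card_filter_le_iff s i.castSucc]
      exact ((lt_card_filter_le_iff t i _).2 le_rfl).trans_le (h _).1
    · rw [← lt_card_filter_le_iff t i, ← Nat.succ_lt_succ_iff]
      exact ((lt_card_filter_le_iff s i.succ _).2 le_rfl).trans_le (h _).2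

/-- The row `r` can stand in an alternating sign matrix below rows with column sums `c`. -/
def RowFits (c r : Fin n → ℤ) : Prop :=
  (∀ j, c j = 0 ∨ c j = 1) ∧ (∀ j, ∑ l ∈ Iic j, r l = 0 ∨ ∑ l ∈ Iic j, r l = 1) ∧ ∑ j, r j = 1

lemma sum_Iic_indicatorRow_sub (s : Fin (k + 1) ↪o Fin n) (t : Fin k ↪o Fin n) (j : Fin n) :
    ∑ l ∈ Iic j, (indicatorRow s - indicatorRow t) l = #{i | s i ≤ j} - #{i | t i ≤ j} := by
  simp [sum_sub_distrib, sum_Iic_indicatorRow]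

lemma rowFits_indicatorRow_iff {s : Fin (k + 1) ↪o Fin n} {t : Fin k ↪o Fin n} :
    RowFits (indicatorRow t) (indicatorRow s - indicatorRow t) ↔ ⇑t ∈ interlacing s := by
  have htotal : ∑ j, (indicatorRow s - indicatorRow t) j = 1 := by
    simp [sum_sub_distrib, sum_indicatorRow]
  simp only [RowFits, indicatorRow_eq_zero_or_one, implies_true, htotal, true_and, and_true,
    sum_Iic_indicatorRow_sub, mem_interlacing_iff_card]
  exact forall_congr' fun j ↦ by lia

/-- The contribution to `nuASM` of a row `r` below rows with column sums `c`. -/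
def rowNu (c r : Fin n → ℤ) : ℕ :=
  (∑ j, c j * ∑ l ∈ Iic j, r l).toNat

/-- The contribution to `muASM` of a row `r`. -/
def rowMu (r : Fin n → ℤ) : ℕ :=
  #{j | r j = -1}

/-- The sum of the column indices of `r`, counted from the left with the entries of `r` as
multiplicities; for a row with a single nonzero entry `1` it is the number of `0`s to the left of
the `1`. -/
def leftMoment (r : Fin n → ℤ) : ℕ :=
  (∑ j, r j * (j : ℕ)).toNat

/-- The analogue of `leftMoment` with the columns counted from the right. -/
def rightMoment (r : Fin n → ℤ) : ℕ :=
  (∑ j, r j * (j.rev : ℕ)).toNat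

section Interlacing

variable {s : Fin (k + 1) ↪o Fin n} {t : Fin k ↪o Fin n} (h : ⇑t ∈ interlacing s)

include h

lemma card_filter_le_apply_of_mem_interlacing (i : Fin k) :
    #{a | s a ≤ t i} = #{a | t a ≤ t i} + if t i = s i.succ then 1 else 0 := by
  have hcard := mem_interlacing_iff_card.1 h (t i)
  have ht : #{a | t a ≤ t i} = i + 1 := by
    simp [filter_ge_eq_Iic]
  have hs : (i : ℕ) + 1 < #{a | s a ≤ t i} ↔ t i = s i.succ :=
    (lt_card_filter_le_iff s i.succ (t i)).trans (mem_interlacing.1 h i).2.ge_iff_eq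
  split_ifs with hi <;> lia

lemma rowNu_indicatorRow :
    rowNu (indicatorRow t) (indicatorRow s - indicatorRow t) = #{i | t i = s i.succ} := by
  simp only [rowNu, sum_Iic_indicatorRow_sub, sum_indicatorRow_mul,
    card_filter_le_apply_of_mem_interlacing h]
  simp

lemma apply_mem_range_iff_of_mem_interlacing (i : Fin k) :
    t i ∈ Set.range s ↔ t i = s i.succ ∨ t i = s i.castSucc := by
  constructor
  · rintro ⟨a, ha⟩
    have hlo : i.castSucc ≤ a := s.le_iff_le.1 (ha ▸ (mem_interlacing.1 h i).1)
    have hhi : a ≤ i.succ := s.le_iff_le.1 (ha ▸ (mem_interlacing.1 h i).2)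
    have : a = i.succ ∨ a = i.castSucc := by
      simp only [Fin.ext_iff, Fin.le_def, Fin.val_succ, Fin.val_castSucc] at *
      lia
    rwa [← ha, s.eq_iff_eq, s.eq_iff_eq]
  · rintro (hi | hi) <;> exact hi ▸ Set.mem_range_self _

lemma rowMu_indicatorRow :
    rowMu (indicatorRow s - indicatorRow t) = #{i | t i ≠ s i.succ ∧ t i ≠ s i.castSucc} := by
  have hmap : ({j | (indicatorRow s - indicatorRow t) j = -1} : Finset (Fin n)) =
      ({i | t i ≠ s i.succ ∧ t i ≠ s i.castSucc} : Finset (Fin k)).map t.toEmbedding := by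
    ext j
    have hj : (indicatorRow s - indicatorRow t) j = -1 ↔
        j ∈ Set.range t ∧ j ∉ Set.range s := by
      by_cases hs : j ∈ Set.range s <;> by_cases ht : j ∈ Set.range t <;>
        simp [indicatorRow, hs, ht]
    rw [mem_filter_univ, hj, mem_map]
    constructor
    · rintro ⟨⟨i, rfl⟩, hi⟩
      rw [apply_mem_range_iff_of_mem_interlacing h, not_or] at hi
      exact ⟨i, by simpa using hi, rfl⟩
    · rintro ⟨i, hi, rfl⟩
      rw [mem_filter_univ, ← not_or, ← apply_mem_range_iff_of_mem_interlacing h] at hi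
      exact ⟨⟨i, rfl⟩, hi⟩
  rw [rowMu, hmap, card_map]

lemma leftMoment_indicatorRow :
    leftMoment (indicatorRow s - indicatorRow t) =
      (s 0 : ℕ) + ∑ i, ((s i.succ : ℕ) - t i) := by
  have hle (i : Fin k) : (t i : ℕ) ≤ s i.succ := (mem_interlacing.1 h i).2
  have hsum : ∑ j, (indicatorRow s - indicatorRow t) j * (j : ℕ) =
      ((s 0 : ℕ) + ∑ i, ((s i.succ : ℕ) - t i) : ℕ) := by
    simp [Nat.cast_sub (hle _), sub_mul, sum_sub_distrib, sum_indicatorRow_mul,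
      Fin.sum_univ_succ, add_sub_assoc]
  rw [leftMoment, hsum, Int.toNat_natCast]

lemma rightMoment_indicatorRow :
    rightMoment (indicatorRow s - indicatorRow t) =
      ((s (Fin.last k)).rev : ℕ) + ∑ i, ((t i : ℕ) - s i.castSucc) := by
  have hle (i : Fin k) : (s i.castSucc : ℕ) ≤ t i := (mem_interlacing.1 h i).1
  have hrev (j : Fin n) : ((j.rev : ℕ) : ℤ) = n - 1 - j := by
    grind
  have hsum : ∑ j, (indicatorRow s - indicatorRow t) j * (j.rev : ℕ) =
      (((s (Fin.last k)).rev : ℕ) + ∑ i, ((t i : ℕ) - s i.castSucc) : ℕ) := by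
    simp only [Pi.sub_apply, sub_mul, sum_sub_distrib, sum_indicatorRow_mul,
      Fin.sum_univ_castSucc, hrev, Nat.cast_add, Nat.cast_sum, Nat.cast_sub (hle _)]
    ring
  rw [rightMoment, hsum, Int.toNat_natCast]

end Interlacing

variable {R : Type*} [CommRing R]

lemma prod_entryWeight (x : R) (s : Fin (k + 1) ↪o Fin n) (t : Fin k → Fin n) :
    ∏ i, entryWeight x (s i.castSucc) (s i.succ) (t i) =
      x ^ #{i | t i = s i.succ} * (x + 1) ^ #{i | t i ≠ s i.succ ∧ t i ≠ s i.castSucc} := by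
  simp only [← prod_const, prod_filter, ← prod_mul_distrib]
  refine prod_congr rfl fun i _ ↦ ?_
  rw [entryWeight]
  split_ifs <;> simp_all

open Classical in
/-- The weight of a row `r` placed below rows with column sums `c`; it vanishes if `r` does not
fit there. -/
noncomputable def rowWeight (x z u : R) (c r : Fin n → ℤ) : R :=
  if RowFits c r then
    x ^ rowNu c r * (x + 1) ^ rowMu r * (z ^ leftMoment r * u ^ rightMoment r)
  else 0

lemma rowWeight_indicatorRow (x z u : R) (s : Fin (k + 1) ↪o Fin n) (t : Fin k ↪o Fin n) :
    rowWeight x z u (indicatorRow t) (indicatorRow s - indicatorRow t) =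
      if ⇑t ∈ interlacing s then stepWeight x z u s t else 0 := by
  classical
  rw [rowWeight]
  refine if_ctx_congr rowFits_indicatorRow_iff (fun h ↦ ?_) fun _ ↦ rfl
  rw [rowNu_indicatorRow h, rowMu_indicatorRow h, leftMoment_indicatorRow h,
    rightMoment_indicatorRow h, stepWeight, prod_mul_distrib, prod_entryWeight,
    prod_mul_distrib, prod_pow_eq_pow_sum, prod_pow_eq_pow_sum]
  ring

end Rows

section Stacks

open Matrix nonZeroDivisors

variable {R : Type*} [CommRing R] {k n : ℕ}

/-- The row with entries in `{-1, 0, 1}` encoded by `e`, as in `asmMat`. -/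
def decodeRow (e : Fin n → Fin 3) : Fin n → ℤ :=
  fun j ↦ (e j : ℤ) - 1

lemma decodeRow_injective : Function.Injective (decodeRow (n := n)) := by
  intro e f h
  ext j
  simpa [decodeRow] using congrFun h j

lemma exists_decodeRow_eq {r : Fin n → ℤ} (hr : ∀ j, -1 ≤ r j ∧ r j ≤ 1) :
    ∃ e, decodeRow e = r := by
  refine ⟨fun j ↦ ⟨(r j + 1).toNat, by have := hr j; lia⟩, ?_⟩
  ext j
  have := hr j
  simp only [decodeRow]
  lia

/-- The generating function of the arrays of `k` rows which are the top `k` rows of an alternating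
sign matrix, up to the requirement that the full column sums be `1`; instead these are given by
`c`. The row with index `i` is refined by the variables `v i` and `w i`. -/
noncomputable def stackSum (x : R) (v w : Fin k → R) (c : Fin n → ℤ) : R :=
  ∑ e : Fin k → Fin n → Fin 3, if ∑ i, decodeRow (e i) = c then
    ∏ i, rowWeight x (v i) (w i) (∑ i' ∈ Iio i, decodeRow (e i')) (decodeRow (e i)) else 0

lemma stackSum_zero (x : R) (v w : Fin 0 → R) : stackSum x v w (0 : Fin n → ℤ) = 1 := by
  simp [stackSum]

lemma stackSum_succ (x : R) (v w : Fin (k + 1) → R) (c : Fin n → ℤ) :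
    stackSum x v w c = ∑ r : Fin n → Fin 3,
      rowWeight x (v (Fin.last k)) (w (Fin.last k)) (c - decodeRow r) (decodeRow r) *
        stackSum x (v ∘ Fin.castSucc) (w ∘ Fin.castSucc) (c - decodeRow r) := by
  simp only [stackSum]
  rw [← (Fin.snocEquiv fun _ ↦ Fin n → Fin 3).sum_comp, Fintype.sum_prod_type]
  refine sum_congr rfl fun r _ ↦ ?_
  rw [mul_sum]
  refine sum_congr rfl fun e _ ↦ ?_
  simp only [Fin.snocEquiv, Equiv.coe_fn_mk, Fin.sum_univ_castSucc, Fin.prod_univ_castSucc,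
    Fin.snoc_castSucc, Fin.snoc_last, Fin.Iio_last_eq_map, Fin.sum_Iio_castSucc, sum_map,
    Fin.coe_castSuccEmb, eq_sub_iff_add_eq, mul_ite, mul_zero, Function.comp_apply]
  split_ifs with h
  · rw [← h, add_sub_cancel_right, mul_comm]
  · rfl

lemma stackSum_indicatorRow_succ (x : R) (v w : Fin (k + 1) → R) (s : Fin (k + 1) ↪o Fin n) :
    stackSum x v w (indicatorRow s) = ∑ t : Fin k ↪o Fin n,
      rowWeight x (v (Fin.last k)) (w (Fin.last k)) (indicatorRow t)
          (indicatorRow s - indicatorRow t) *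
        stackSum x (v ∘ Fin.castSucc) (w ∘ Fin.castSucc) (indicatorRow t) := by
  have hdecode (t : Fin k ↪o Fin n) : ∃ e, decodeRow e = indicatorRow s - indicatorRow t :=
    exists_decodeRow_eq fun j ↦ by
      have hs := indicatorRow_eq_zero_or_one s j
      have ht := indicatorRow_eq_zero_or_one t j
      rw [Pi.sub_apply]
      lia
  choose e he using hdecode
  have he_injective : Function.Injective e := fun t t' h ↦
    indicatorRow_injective (sub_right_injective ((he t).symm.trans (h ▸ he t')))
  rw [stackSum_succ]
  refine (Fintype.sum_of_injective e he_injective _ _ (fun r hr ↦ ?_) fun t ↦ ?_).symm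
  · by_cases hfits : RowFits (indicatorRow s - decodeRow r) (decodeRow r)
    · obtain ⟨t, ht⟩ := exists_indicatorRow_eq (k := k) hfits.1
        (by simp [sum_sub_distrib, sum_indicatorRow, hfits.2.2])
      exact absurd ⟨t, decodeRow_injective (by rw [he, ht, sub_sub_cancel])⟩ hr
    · rw [rowWeight, if_neg hfits, zero_mul]
  · rw [he, sub_sub_cancel]

lemma monotone_of_mem_interlacing {s : Fin (k + 1) ↪o Fin n} {t : Fin k → Fin n}
    (h : t ∈ interlacing s) : Monotone t := by
  intro i j hij
  rw [mem_interlacing] at h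
  rcases hij.eq_or_lt with rfl | hlt
  · rfl
  · exact (h i).2.trans ((s.monotone (Fin.succ_le_castSucc_iff.2 hlt)).trans (h j).1)

lemma sum_interlacing_mul_det (M : Matrix (Fin k) (Fin n) R) (s : Fin (k + 1) ↪o Fin n)
    (f : (Fin k → Fin n) → R) :
    ∑ t ∈ interlacing s, f t * (M.submatrix id t).det =
      ∑ t : Fin k ↪o Fin n, if ⇑t ∈ interlacing s then f t * (M.submatrix id t).det else 0 := by
  rw [Fintype.sum_of_injective (fun t : Fin k ↪o Fin n ↦ ⇑t) DFunLike.coe_injective _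
    (fun t ↦ if t ∈ interlacing s then f t * (M.submatrix id t).det else 0) _ fun _ ↦ rfl]
  · simp
  · intro t ht
    refine ite_eq_right_iff.2 fun hmem ↦ ?_
    have hinj : ¬ Function.Injective t := fun hinj ↦ ht
      ⟨.ofStrictMono t ((monotone_of_mem_interlacing hmem).strictMono_of_injective hinj), rfl⟩
    simp only [Function.Injective, not_forall] at hinj
    obtain ⟨a, b, hab, hne⟩ := hinj
    rw [det_zero_of_column_eq hne (by simp [hab]), mul_zero]

theorem stackSum_indicatorRow_mul_lambdaVandermonde (x : R) (v w : Fin k → R)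
    (hw : ∀ i, w i ∈ R⁰) (s : Fin k ↪o Fin n) :
    stackSum x v w (indicatorRow s) * lambdaVandermonde (-1) v w =
      ((rectVandermonde v w n).submatrix id s).det * lambdaVandermonde x v w := by
  induction k with
  | zero =>
    have hs : indicatorRow s = 0 := by
      ext j
      simp [indicatorRow]
    simp [hs, stackSum_zero, lambdaVandermonde]
  | succ k ih =>
    have hsum : stackSum x v w (indicatorRow s) *
        lambdaVandermonde (-1) (v ∘ Fin.castSucc) (w ∘ Fin.castSucc) =
          (∑ t ∈ interlacing s, stepWeight x (v (Fin.last k)) (w (Fin.last k)) s t *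
            ((rectVandermonde (v ∘ Fin.castSucc) (w ∘ Fin.castSucc) n).submatrix id t).det) *
          lambdaVandermonde x (v ∘ Fin.castSucc) (w ∘ Fin.castSucc) := by
      rw [sum_interlacing_mul_det, stackSum_indicatorRow_succ, sum_mul, sum_mul]
      refine sum_congr rfl fun t _ ↦ ?_
      rw [mul_assoc, ih _ (w ∘ Fin.castSucc) fun i ↦ hw i.castSucc, rowWeight_indicatorRow]
      split_ifs <;> ring
    have hdet := prod_mul_sum_interlacing_mul_det x v w (hw _) s
    rw [lambdaVandermonde_castSucc, lambdaVandermonde_castSucc x, ← mul_assoc, hsum]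
    simp only [neg_one_mul, ← sub_eq_add_neg]
    linear_combination lambdaVandermonde x (v ∘ Fin.castSucc) (w ∘ Fin.castSucc) * hdet

lemma map_stackSum {S : Type*} [CommRing S] (f : R →+* S) (x : R) (v w : Fin k → R)
    (c : Fin n → ℤ) : f (stackSum x v w c) = stackSum (f x) (f ∘ v) (f ∘ w) c := by
  simp [stackSum, rowWeight, apply_ite f]

lemma stackSum_one_of_mem_nonZeroDivisors (x : R) (v w : Fin n → R) (hw : ∀ i, w i ∈ R⁰)
    (hdet : (projVandermonde v w).det ∈ R⁰) :
    stackSum x v w (1 : Fin n → ℤ) = lambdaVandermonde x v w := by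
  have hone : indicatorRow (RelEmbedding.refl (α := Fin n) (· ≤ ·)) = 1 := by
    ext j
    simp [indicatorRow]
  have h := stackSum_indicatorRow_mul_lambdaVandermonde x v w hw (.refl _)
  rw [hone, lambdaVandermonde_neg_one] at h
  exact (mul_cancel_left_mem_nonZeroDivisors hdet).1 ((mul_comm _ _).trans h)

lemma det_projVandermonde_X_ne_zero {σ S : Type*} [CommRing S] [IsDomain S] {a b : Fin n → σ}
    (ha : Function.Injective a) (hab : ∀ i j, b i ≠ a j) :
    (projVandermonde (fun i ↦ (MvPolynomial.X (a i) : MvPolynomial σ S))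
      fun i ↦ MvPolynomial.X (b i)).det ≠ 0 := by
  classical
  rw [det_projVandermonde]
  refine prod_ne_zero_iff.2 fun i _ ↦ prod_ne_zero_iff.2 fun j hj h ↦ ?_
  have hij : a i ≠ a j := ha.ne (mem_Ioi.1 hj).ne
  simpa [hij, hab] using congrArg (MvPolynomial.eval fun c ↦ if c = a j then 0 else 1) h

theorem stackSum_one (x : R) (v w : Fin n → R) :
    stackSum x v w (1 : Fin n → ℤ) = lambdaVandermonde x v w := by
  let X : Option (Fin n ⊕ Fin n) → MvPolynomial (Option (Fin n ⊕ Fin n)) ℤ := MvPolynomial.X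
  have huniv := stackSum_one_of_mem_nonZeroDivisors (X none) (fun i ↦ X (some (.inl i)))
    (fun i ↦ X (some (.inr i))) (fun i ↦ mem_nonZeroDivisors_of_ne_zero (MvPolynomial.X_ne_zero _))
    (mem_nonZeroDivisors_of_ne_zero (det_projVandermonde_X_ne_zero
      ((Option.some_injective _).comp Sum.inl_injective) (by simp)))
  let f := MvPolynomial.eval₂Hom (Int.castRingHom R) fun o : Option (Fin n ⊕ Fin n) ↦
    o.elim x (Sum.elim v w)
  have h := congrArg f huniv
  rw [map_stackSum, map_lambdaVandermonde] at h
  simpa [f, X, Function.comp_def] using h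

end Stacks

section ASM

variable {n : ℕ}

lemma forall_sum_Iic_iff_forall_sum_Iio {M : Type*} [AddCommMonoid M] {f : Fin n → M}
    {P : M → Prop} (hzero : P 0) (huniv : P (∑ i, f i)) :
    (∀ i, P (∑ i' ∈ Iic i, f i')) ↔ ∀ i, P (∑ i' ∈ Iio i, f i') := by
  cases n with
  | zero => simp
  | succ n =>
    have hIio_zero : Iio (0 : Fin (n + 1)) = ∅ := Iio_bot
    have hIio (i : Fin n) : Iio i.succ = Iic i.castSucc := by
      ext
      simp [Fin.le_castSucc_iff]
    have hIic : Iic (Fin.last n) = univ := by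
      ext
      simp [Fin.le_last]
    rw [Fin.forall_fin_succ', Fin.forall_fin_succ]
    simp only [hIio, hIic, hIio_zero, sum_empty, hzero, huniv, true_and, and_true]

lemma isASM_iff_forall_rowFits {A : Fin n → Fin n → ℤ}
    (hA : ∀ i j, A i j = -1 ∨ A i j = 0 ∨ A i j = 1) :
    IsASM A ↔ ∑ i, A i = 1 ∧ ∀ i, RowFits (∑ i' ∈ Iio i, A i') (A i) := by
  have hcol : (∑ i, A i = 1) ↔ ∀ j, ∑ i, A i j = 1 := by
    simp [funext_iff]
  have hpartial (h : ∑ i, A i = 1) :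
      (∀ i j, ∑ i' ∈ Iic i, A i' j = 0 ∨ ∑ i' ∈ Iic i, A i' j = 1) ↔
        ∀ i j, (∑ i' ∈ Iio i, A i') j = 0 ∨ (∑ i' ∈ Iio i, A i') j = 1 := by
    simpa only [Finset.sum_apply] using forall_sum_Iic_iff_forall_sum_Iio (f := A)
      (P := fun c ↦ ∀ j, c j = 0 ∨ c j = 1) (by simp) (by rw [h]; simp)
  simp only [IsASM, RowFits, filter_ge_eq_Iic, hA, implies_true, true_and, ← hcol, forall_and]
  constructor
  · rintro ⟨hrow, hIic, hrow', hsum⟩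
    exact ⟨hsum, (hpartial hsum).1 hIic, hrow, hrow'⟩
  · rintro ⟨hsum, hIio, hrow, hrow'⟩
    exact ⟨hrow, (hpartial hsum).2 hIio, hrow', hsum⟩

lemma nuASM_eq_sum_rowNu {A : Fin n → Fin n → ℤ}
    (h : ∀ i, RowFits (∑ i' ∈ Iio i, A i') (A i)) :
    nuASM A = ∑ i, rowNu (∑ i' ∈ Iio i, A i') (A i) := by
  have hnonneg (i : Fin n) :
      0 ≤ ∑ j, (∑ i' ∈ Iio i, A i') j * ∑ l ∈ Iic j, A i l :=
    sum_nonneg fun j _ ↦ mul_nonneg (by have := (h i).1 j; lia) (by have := (h i).2.1 j; lia)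
  simp only [rowNu]
  rw [nuASM, ← Int.toNat_natCast (∑ i, Int.toNat _), Nat.cast_sum]
  simp only [Int.toNat_of_nonneg (hnonneg _)]
  congr 1
  rw [sum_comm]
  refine sum_congr rfl fun i _ ↦ ?_
  rw [sum_comm]
  refine sum_congr rfl fun j _ ↦ ?_
  rw [Finset.sum_apply, sum_mul_sum, ← filter_gt_eq_Iio, sum_filter]
  refine sum_congr rfl fun i' _ ↦ ?_
  split_ifs with hi <;> simp [hi, ← sum_filter, filter_ge_eq_Iic]

lemma muASM_eq_sum_rowMu (A : Fin n → Fin n → ℤ) : muASM A = ∑ i, rowMu (A i) := by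
  simp only [muASM, rowMu, card_filter, Fintype.sum_prod_type]

lemma exists_eq_single {r : Fin n → ℤ} (hr : ∀ j, r j = 0 ∨ r j = 1) (hsum : ∑ j, r j = 1) :
    ∃ j, r = Pi.single j 1 := by
  obtain ⟨s, rfl⟩ := exists_indicatorRow_eq (k := 1) hr (by simpa using hsum)
  refine ⟨s 0, ?_⟩
  ext j
  simp [indicatorRow, Set.indicator_apply, Pi.single_apply, eq_comm]

lemma leftMoment_single (j : Fin n) : leftMoment (Pi.single j 1) = j := by
  simp [leftMoment, Pi.single_apply]

lemma rightMoment_single (j : Fin n) : rightMoment (Pi.single j 1) = j.rev := by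
  simp [rightMoment, Pi.single_apply, -Fin.val_rev]

lemma rhoT_eq_leftMoment {m : ℕ} {A : Fin (m + 1) → Fin (m + 1) → ℤ} (hA : IsASM A) :
    rhoT A = leftMoment (A 0) := by
  obtain ⟨-, -, hcol, hrow, -⟩ := hA
  obtain ⟨j, hj⟩ := exists_eq_single (r := A 0)
    (fun j ↦ by simpa [Fin.le_zero_iff, filter_eq'] using hcol 0 j) (hrow 0)
  have hzeros (a : Fin (m + 1)) : (A 0 a = 0 ∧ ∃ b, a < b ∧ A 0 b = 1) ↔ a < j := by
    simpa [hj, Pi.single_apply, -Fin.val_fin_lt] using ne_of_lt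
  rw [hj, leftMoment_single, ← Fin.card_Iio]
  simp [rhoT, hzeros, filter_gt_eq_Iio]

lemma rhoB_eq_rightMoment {m : ℕ} {A : Fin (m + 1) → Fin (m + 1) → ℤ} (hA : IsASM A) :
    rhoB A = rightMoment (A (Fin.last m)) := by
  obtain ⟨hsum, hfits⟩ := (isASM_iff_forall_rowFits hA.1).1 hA
  have hlast : ∑ i ∈ Iio (Fin.last m), A i + A (Fin.last m) = 1 := by
    rw [← hsum, Fin.sum_univ_castSucc, Fin.Iio_last_eq_map, sum_map]
    rfl
  obtain ⟨j, hj⟩ := exists_eq_single (r := A (Fin.last m)) (fun j ↦ by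
    have hc := (hfits (Fin.last m)).1 j
    have := congrFun hlast j
    simp only [Pi.add_apply, Pi.one_apply] at this
    lia) (hfits _).2.2
  have hzeros (a : Fin (m + 1)) :
      (A (Fin.last m) a = 0 ∧ ∃ b < a, A (Fin.last m) b = 1) ↔ j < a := by
    simpa [hj, Pi.single_apply] using ne_of_gt
  change #{a | A (Fin.last m) a = 0 ∧ ∃ b < a, A (Fin.last m) b = 1} = _
  simp only [hzeros]
  rw [hj, rightMoment_single, filter_lt_eq_Ioi, Fin.card_Ioi, Fin.val_rev]
  lia

theorem Zopp_eq_stackSum {R : Type*} [CommRing R] (x z1 z2 : R) (m : ℕ) :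
    Zopp (m + 1) x (x + 1) z1 z2 =
      stackSum x (Pi.mulSingle 0 z1) (Pi.mulSingle (Fin.last m) z2) (1 : Fin (m + 1) → ℤ) := by
  classical
  rw [Zopp, Zqua, stackSum]
  refine sum_congr rfl fun e _ ↦ ?_
  have hentries (i j) : asmMat e i j = -1 ∨ asmMat e i j = 0 ∨ asmMat e i j = 1 := by
    have := (e i j).isLt
    simp only [asmMat]
    lia
  have hiff := isASM_iff_forall_rowFits hentries
  change (_ ↔ ∑ i, decodeRow (e i) = 1 ∧
    ∀ i, RowFits (∑ i' ∈ Iio i, decodeRow (e i')) (decodeRow (e i))) at hiff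
  simp only [rowWeight, Fintype.prod_ite_zero, ← ite_and]
  by_cases hA : IsASM (asmMat e)
  · have hfits := hiff.1 hA
    have hnu := nuASM_eq_sum_rowNu (A := asmMat e) hfits.2
    have hpow (i₀ : Fin (m + 1)) (a : R) (p : Fin (m + 1) → ℕ) :
        ∏ i, Pi.mulSingle (M := fun _ ↦ R) i₀ a i ^ p i = a ^ p i₀ := by
      rw [Fintype.prod_eq_single i₀ fun i hi ↦ by simp [hi], Pi.mulSingle_eq_same]
    rw [if_pos hA, if_pos hfits]
    simp only [hnu, muASM_eq_sum_rowMu, rhoT_eq_leftMoment hA, rhoB_eq_rightMoment hA, one_pow,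
      mul_one, prod_mul_distrib, prod_pow_eq_pow_sum, hpow, mul_assoc]
    rfl
  · rw [if_neg hA, if_neg (mt hiff.2 hA)]

end ASM

/-- The opposite-boundary doubly-refined ASM generating function at `y = x + 1`,
stated for all values of the variables in any commutative ring, equivalently
as an identity of polynomials in `ℤ[x,z1,z2]`. -/
theorem stmt16 {R : Type*} [CommRing R] (x z1 z2 : R) (n : ℕ) (hn : 2 ≤ n) :
    Zopp n x (x + 1) z1 z2 =
      (x * z1 * z2 + 1) * ((x * z1 + 1) * (x * z2 + 1)) ^ (n - 2) *
        (x + 1) ^ ((n - 2) * (n - 3) / 2) := by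
  obtain ⟨m, rfl⟩ := Nat.exists_eq_add_of_le' hn
  rw [Zopp_eq_stackSum, stackSum_one, lambdaVandermonde_mulSingle, Nat.add_sub_cancel,
    show m + 2 - 3 = m - 1 by lia]
end

section
/- For every integer n ≥ 5, the quadruply-refined ASM generating function with bulk parameters related by y = x+1 is given explicitly by: (x·z4·z1+z4+z1−1)(x·z1·z2−x·z1−x·z2−1)(x·z2·z3+z2+z3−1)(x·z3·z4−x·z3−x·z4−1)·Zqua_n(x,x+1;z1,z2,z3,z4) = z1z2z3z4·(x·z1·z3+1)(x·z2·z4+1)·((xz1+1)(xz2+1)(xz3+1)(xz4+1))^{n−2}·(x+1)^{(n−4)(n−5)/2} − ( (z2−1)(z3−1)·z4·z1·((xz4+1)(xz1+1))^{n−2} + (z4−1)(z1−1)·z2·z3·((xz2+1)(xz3+1))^{n−2} )·(x·z1·z2−x·z1−x·z2−1)(x·z3·z4−x·z3−x·z4−1)·(x+1)^{(n−3)(n−4)/2} − ( (z3−1)(z4−1)·z1·z2·(z3·z4)^{n−1}·((xz1+1)(xz2+1))^{n−2} + (z1−1)(z2−1)·z3·z4·(z1·z2)^{n−1}·((xz3+1)(xz4+1))^{n−2}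 )·(x·z4·z1+z4+z1−1)(x·z2·z3+z2+z3−1)·x^n·(x+1)^{(n−3)(n−4)/2} + (z1−1)(z2−1)(z3−1)(z4−1)·( (x·z1·z2−x·z1−x·z2−1)(x·z3·z4−x·z3−x·z4−1) + (x·z4·z1+z4+z1−1)(x·z2·z3+z2+z3−1)·(z1·z2·z3·z4)^{n−1}·x^{2n−1} )·(x+1)^{(n−2)(n−3)/2}, as an identity of polynomials in ℤ[x,z1,z2,z3,z4]. -/
open Finset

/-!
At `y = x + 1` the weight `(x + 1) ^ μ(A)` counts, with weights `x` and `1`, the subsets of the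
entries `-1` of `A`. In terms of corner sums these subsets are the alternating sign matrices of the
next smaller size interlacing with `A`, so the generating function is a partition function of two
interlacing layers. Summing over the larger layer instead of the smaller one replaces the weights
`W i j` by the Robbins–Rumsey condensation
`(W i j * W (i + 1) (j + 1) + x * (W i (j + 1) * W (i + 1) j)) / V (i + 1) (j + 1)`, where `V` are
the weights of the smaller layer. Boundary weights that are geometric in `z1`, `z2`, `z3`, `z4`
keep this shape under condensation, up to powers of `x + 1` and `x * z + 1` and explicit corner
entries, which are geometric sums. Condensing down to size `1` evaluates the generating function;
the four factors in front of it clear the denominators of the geometric sums. The division is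
harmless at positive rational values, which determine an identity of polynomials.
-/

section CornerSums

variable {m : ℕ} {h : ℕ → ℕ → ℤ}

/-- The mixed second difference of an array, which recovers a matrix from its corner sums
`h i j = ∑ a < i, ∑ b < j, A a b`. -/
def cornerDiff (h : ℕ → ℕ → ℤ) (i j : ℕ) : ℤ :=
  h (i + 1) (j + 1) + h i j - h i (j + 1) - h (i + 1) j

/-- `h` is the array of corner sums of an alternating sign matrix of size `m`. The matrix is
extended by the infinite identity matrix, so that arrays of all sizes live on `ℕ × ℕ`. -/
structure IsCornerSum (m : ℕ) (h : ℕ → ℕ → ℤ) : Prop where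
  eq_min : ∀ i j : ℕ, i = 0 ∨ j = 0 ∨ m ≤ i ∨ m ≤ j → h i j = min (i : ℤ) (j : ℤ)
  row : ∀ i j, h i j ≤ h i (j + 1) ∧ h i (j + 1) ≤ h i j + 1
  col : ∀ i j, h i j ≤ h (i + 1) j ∧ h (i + 1) j ≤ h i j + 1

theorem cornerDiff_add (h k : ℕ → ℕ → ℤ) (i j : ℕ) :
    cornerDiff (h + k) i j = cornerDiff h i j + cornerDiff k i j := by
  simp only [cornerDiff, Pi.add_apply]
  ring

theorem cornerDiff_sub (h k : ℕ → ℕ → ℤ) (i j : ℕ) :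
    cornerDiff (h - k) i j = cornerDiff h i j - cornerDiff k i j := by
  simp only [cornerDiff, Pi.sub_apply]
  ring

theorem cornerDiff_swap (h : ℕ → ℕ → ℤ) (i j : ℕ) :
    cornerDiff (fun i j => h j i) i j = cornerDiff h j i := by
  simp only [cornerDiff]
  ring

namespace IsCornerSum

theorem swap (H : IsCornerSum m h) : IsCornerSum m fun i j => h j i :=
  ⟨fun i j hij => by rw [H.eq_min j i (by tauto), min_comm], fun i j => H.col j i,
    fun i j => H.row j i⟩

theorem zero_left (H : IsCornerSum m h) (j : ℕ) : h 0 j = 0 := by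
  simp [H.eq_min 0 j (Or.inl rfl)]

theorem zero_right (H : IsCornerSum m h) (i : ℕ) : h i 0 = 0 :=
  H.swap.zero_left i

theorem le_left (H : IsCornerSum m h) (i j : ℕ) : h i j ≤ i := by
  induction i with
  | zero => simp [H.zero_left j]
  | succ i ih => have := H.col i j; push_cast; linarith

theorem nonneg (H : IsCornerSum m h) (i j : ℕ) : 0 ≤ h i j := by
  induction i with
  | zero => simp [H.zero_left j]
  | succ i ih => exact ih.trans (H.col i j).1

theorem cornerDiff_mem (H : IsCornerSum m h) (i j : ℕ) :
    cornerDiff h i j = -1 ∨ cornerDiff h i j = 0 ∨ cornerDiff h i j = 1 := by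
  have := H.row i j
  have := H.row (i + 1) j
  simp only [cornerDiff]
  omega

theorem cornerDiff_of_le (H : IsCornerSum m h) {i j : ℕ} (hij : m ≤ i ∨ m ≤ j) :
    cornerDiff h i j = if i = j then 1 else 0 := by
  simp only [cornerDiff]
  rw [H.eq_min i j (by omega), H.eq_min (i + 1) j (by omega), H.eq_min i (j + 1) (by omega),
    H.eq_min (i + 1) (j + 1) (by omega)]
  push_cast
  split_ifs <;> omega

theorem row_interior_of_cornerDiff_eq_neg_one (H : IsCornerSum m h) {i j : ℕ}
    (hij : cornerDiff h i j = -1) : 0 < i ∧ i + 1 < m := by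
  simp only [cornerDiff] at hij
  have row := H.row i j
  have row' := H.row (i + 1) j
  constructor
  · by_contra! hi
    obtain rfl : i = 0 := by omega
    have := H.zero_left j
    have := H.zero_left (j + 1)
    omega
  · by_contra! hi
    have := H.le_left i (j + 1)
    have := H.eq_min (i + 1) j (by omega)
    have := H.eq_min (i + 1) (j + 1) (by omega)
    have := H.col i j
    push_cast at *
    omega

theorem interior_of_cornerDiff_eq_neg_one (H : IsCornerSum m h) {i j : ℕ}
    (hij : cornerDiff h i j = -1) : (0 < i ∧ i + 1 < m) ∧ 0 < j ∧ j + 1 < m :=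
  ⟨H.row_interior_of_cornerDiff_eq_neg_one hij,
    H.swap.row_interior_of_cornerDiff_eq_neg_one ((cornerDiff_swap h j i).trans hij)⟩

theorem sum_row (H : IsCornerSum m h) (i q : ℕ) :
    ∑ j ∈ range q, cornerDiff h i j = h (i + 1) q - h i q := by
  calc ∑ j ∈ range q, cornerDiff h i j
      = ∑ j ∈ range q, ((h (i + 1) (j + 1) - h i (j + 1)) - (h (i + 1) j - h i j)) :=
        sum_congr rfl fun j _ => by rw [cornerDiff]; ring
    _ = h (i + 1) q - h i q := by
        rw [sum_range_sub fun j => h (i + 1) j - h i j, H.zero_right, H.zero_right]; ring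

theorem sum_sum_cornerDiff (H : IsCornerSum m h) (p q : ℕ) :
    ∑ i ∈ range p, ∑ j ∈ range q, cornerDiff h i j = h p q := by
  simp only [H.sum_row]
  rw [sum_range_sub fun i => h i q, H.zero_left, sub_zero]

end IsCornerSum

theorem finite_isCornerSum (m : ℕ) : {h | IsCornerSum m h}.Finite := by
  refine Set.Finite.of_injOn (f := fun h (i j : Fin m) => h i j)
    (t := {g | ∀ i, g i ∈ {v : Fin m → ℤ | ∀ j, v j ∈ Set.Icc (0 : ℤ) m}}) ?_ ?_ ?_
  · intro h (H : IsCornerSum m h) i j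
    exact ⟨H.nonneg i j, (H.le_left i j).trans (by exact_mod_cast i.2.le)⟩
  · intro h (H : IsCornerSum m h) k (K : IsCornerSum m k) hk
    funext i j
    by_cases hij : i < m ∧ j < m
    · exact congrFun (congrFun hk ⟨i, hij.1⟩) ⟨j, hij.2⟩
    · rw [H.eq_min i j (by omega), K.eq_min i j (by omega)]
  · exact Set.Finite.pi' fun _ => Set.Finite.pi' fun _ => Set.finite_Icc _ _

/-- The finite set of corner-sum arrays of size `m`, the index set of all partition functions
below. -/
noncomputable def cornerSums (m : ℕ) : Finset (ℕ → ℕ → ℤ) := (finite_isCornerSum m).toFinset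

@[simp] theorem mem_cornerSums : h ∈ cornerSums m ↔ IsCornerSum m h := by
  simp [cornerSums]

theorem cornerSums_eq_singleton (hm : m ≤ 1) :
    cornerSums m = {fun i j : ℕ => min (i : ℤ) (j : ℤ)} := by
  refine eq_singleton_iff_unique_mem.2 ⟨mem_cornerSums.2 ⟨fun i j _ => rfl, fun i j => ?_,
    fun i j => ?_⟩, fun h hh => ?_⟩
  · push_cast; omega
  · push_cast; omega
  · funext i j
    exact (mem_cornerSums.1 hh).eq_min i j (by omega)

end CornerSums

section Interlacing

variable {m : ℕ} {h k : ℕ → ℕ → ℤ}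

/-- Interlacing of corner-sum arrays of consecutive sizes, `h` being the larger one. -/
def Interlaces (h k : ℕ → ℕ → ℤ) : Prop :=
  ∀ i j, h i j ≤ k i j ∧ h (i + 1) (j + 1) ≤ k i j + 1 ∧ k i j ≤ h i (j + 1) ∧ k i j ≤ h (i + 1) j

/-- The indicator function of a set of positions. -/
def indArray (T : Finset (ℕ × ℕ)) (i j : ℕ) : ℤ := if (i, j) ∈ T then 1 else 0

/-- The array `d` moved one step down the diagonal and bordered by a zero row and a zero column. -/
def borderZero (d : ℕ → ℕ → ℤ) : ℕ → ℕ → ℤ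
  | i + 1, j + 1 => d i j
  | _, _ => 0

/-- The smallest array that `h` interlaces. -/
def lowerArray (h : ℕ → ℕ → ℤ) (i j : ℕ) : ℤ := max (h i j) (h (i + 1) (j + 1) - 1)

/-- The largest corner-sum array interlacing `k`. Its entry at `(i + 1, j + 1)` is
`min (k (i + 1) (j + 1)) (k i j + 1)`; it is written here in the form in which its monomials
factorize. -/
def upperArray (k : ℕ → ℕ → ℤ) : ℕ → ℕ → ℤ := k + borderZero (k - lowerArray k)

/-- The positions in `[0, m)²` of the entries `c` in the matrix with corner sums `h`. -/
def cellsEq (m : ℕ) (h : ℕ → ℕ → ℤ) (c : ℤ) : Finset (ℕ × ℕ) :=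
  (range m ×ˢ range m).filter fun p => cornerDiff h p.1 p.2 = c

theorem mem_cellsEq {c : ℤ} {i j : ℕ} :
    (i, j) ∈ cellsEq m h c ↔ (i < m ∧ j < m) ∧ cornerDiff h i j = c := by
  simp [cellsEq]

theorem borderZero_succ_succ (d : ℕ → ℕ → ℤ) (i j : ℕ) :
    borderZero d (i + 1) (j + 1) = d i j := rfl

@[simp] theorem borderZero_zero_left (d : ℕ → ℕ → ℤ) (j : ℕ) : borderZero d 0 j = 0 := rfl

@[simp] theorem borderZero_zero_right (d : ℕ → ℕ → ℤ) (i : ℕ) : borderZero d i 0 = 0 := by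
  cases i <;> rfl

theorem borderZero_injective : Function.Injective borderZero := fun d e hde => by
  funext i j
  exact congrFun (congrFun hde (i + 1)) (j + 1)

theorem eq_borderZero {d e : ℕ → ℕ → ℤ} (left : ∀ j, e 0 j = 0) (right : ∀ i, e i 0 = 0)
    (succ : ∀ i j, e (i + 1) (j + 1) = d i j) : e = borderZero d := by
  funext i j
  match i, j with
  | 0, j => exact left j
  | i + 1, 0 => exact right (i + 1)
  | i + 1, j + 1 => exact succ i j

theorem indArray_injective : Function.Injective indArray := fun S T hST => by
  ext ⟨i, j⟩
  have := congrFun (congrFun hST i) j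
  by_cases hS : (i, j) ∈ S <;> by_cases hT : (i, j) ∈ T <;> simp_all [indArray]

theorem exists_indArray_eq_iff {C : Finset (ℕ × ℕ)} {d : ℕ → ℕ → ℤ} :
    (∃ T ⊆ C, indArray T = d) ↔ ∀ i j, d i j = 0 ∨ (i, j) ∈ C ∧ d i j = 1 := by
  constructor
  · rintro ⟨T, hT, rfl⟩ i j
    by_cases hij : (i, j) ∈ T
    · exact Or.inr ⟨hT hij, if_pos hij⟩
    · exact Or.inl (if_neg hij)
  · intro hd
    refine ⟨C.filter fun p => d p.1 p.2 = 1, filter_subset _ _, ?_⟩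
    funext i j
    rcases hd i j with hij | ⟨hC, hij⟩
    · simp [indArray, hij]
    · simp [indArray, hC, hij]

theorem indArray_insert {T : Finset (ℕ × ℕ)} {p : ℕ × ℕ} (hp : p ∉ T) :
    indArray (insert p T) = indArray {p} + indArray T := by
  funext i j
  by_cases hij : (i, j) = p
  · simp [indArray, hij, hp]
  · simp [indArray, hij]

theorem borderZero_add (d e : ℕ → ℕ → ℤ) : borderZero (d + e) = borderZero d + borderZero e :=
  (eq_borderZero (d := d + e) (e := borderZero d + borderZero e) (fun _ => rfl)
    (fun _ => by simp) fun _ _ => rfl).symm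

theorem Interlaces.swap (hk : Interlaces h k) :
    Interlaces (fun i j => h j i) fun i j => k j i := fun i j => by
  have := hk j i
  tauto

theorem Interlaces.eq_min_row (H : IsCornerSum (m + 1) h) (hk : Interlaces h k) {i : ℕ}
    (hi : i = 0 ∨ m ≤ i) (j : ℕ) : k i j = min (i : ℤ) (j : ℤ) := by
  have := hk i j
  rcases hi with rfl | hi
  · have := H.zero_left j
    have := H.zero_left (j + 1)
    push_cast
    omega
  · have := H.eq_min (i + 1) (j + 1) (by omega)
    have := H.eq_min (i + 1) j (by omega)
    have := H.le_left i (j + 1)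
    push_cast at *
    omega

theorem Interlaces.isCornerSum_below (H : IsCornerSum (m + 1) h) (hk : Interlaces h k) :
    IsCornerSum m k := by
  refine ⟨fun i j hij => ?_, fun i j => ?_, fun i j => ?_⟩
  · rcases or_or_or_comm.1 (or_assoc.2 hij) with hi | hj
    · exact hk.eq_min_row H hi j
    · rw [hk.swap.eq_min_row H.swap hj i, min_comm]
  · have := hk i j
    have := hk i (j + 1)
    omega
  · have := hk i j
    have := hk (i + 1) j
    omega

theorem Interlaces.isCornerSum_above (hk : Interlaces h k)
    (hmin : ∀ i j : ℕ, i = 0 ∨ j = 0 ∨ m ≤ i ∨ m ≤ j → h i j = min (i : ℤ) (j : ℤ)) :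
    IsCornerSum m h := by
  refine ⟨hmin, fun i j => ?_, fun i j => ?_⟩
  · cases i with
    | zero => rw [hmin 0 j (by simp), hmin 0 (j + 1) (by simp)]; push_cast; omega
    | succ i =>
      have := hk i j
      have := hk (i + 1) j
      omega
  · cases j with
    | zero => rw [hmin i 0 (by simp), hmin (i + 1) 0 (by simp)]; push_cast; omega
    | succ j =>
      have := hk i j
      have := hk i (j + 1)
      omega

/-! The four inequalities leave a single choice for an entry of `k`, or two consecutive ones where
the matrix of `h` has an entry `-1`. Seen from `k`, the free entries of `h` are those at the
entries `1` of the matrix of `k`. -/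

theorem interlaces_iff_sub_lowerArray (H : IsCornerSum m h) :
    Interlaces h k ↔ ∀ i j, (k - lowerArray h) i j = 0 ∨
      (i, j) ∈ cellsEq m h (-1) ∧ (k - lowerArray h) i j = 1 := by
  refine forall₂_congr fun i j => ?_
  have cell : (i, j) ∈ cellsEq m h (-1) ↔ cornerDiff h i j = -1 := by
    rw [mem_cellsEq, and_iff_right_iff_imp]
    intro hij
    have := H.interior_of_cornerDiff_eq_neg_one hij
    omega
  have := H.row i j
  have := H.row (i + 1) j
  have := H.col i j
  have := H.col i (j + 1)
  simp only [cell, Pi.sub_apply, lowerArray, cornerDiff]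
  omega

theorem isCornerSum_lowerArray (H : IsCornerSum (m + 1) h) : IsCornerSum m (lowerArray h) :=
  Interlaces.isCornerSum_below H ((interlaces_iff_sub_lowerArray H).2 fun _ _ => by simp)

theorem interlaces_iff_succ (K : IsCornerSum m k) (left : ∀ j, h 0 j = 0) (right : ∀ i, h i 0 = 0) :
    Interlaces h k ↔ ∀ i j, (k i (j + 1) ≤ h (i + 1) (j + 1) ∧ k (i + 1) j ≤ h (i + 1) (j + 1)) ∧
      h (i + 1) (j + 1) ≤ k (i + 1) (j + 1) ∧ h (i + 1) (j + 1) ≤ k i j + 1 := by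
  constructor
  · intro hk i j
    have := hk i j
    have := hk i (j + 1)
    have := hk (i + 1) j
    have := hk (i + 1) (j + 1)
    tauto
  · intro hk i j
    refine ⟨?_, (hk i j).2.2, ?_, ?_⟩
    · match i, j with
      | 0, j => exact (left j).trans_le (K.nonneg 0 j)
      | i + 1, 0 => exact (right (i + 1)).trans_le (K.nonneg (i + 1) 0)
      | i + 1, j + 1 => exact (hk i j).2.1
    · cases i with
      | zero => exact (K.zero_left j).trans_le (left (j + 1)).ge
      | succ i => exact (hk i j).1.2
    · cases j with
      | zero => exact (K.zero_right i).trans_le (right (i + 1)).ge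
      | succ j => exact (hk i j).1.1

theorem upperArray_succ_succ (k : ℕ → ℕ → ℤ) (i j : ℕ) :
    upperArray k (i + 1) (j + 1) = min (k (i + 1) (j + 1)) (k i j + 1) := by
  simp only [upperArray, Pi.add_apply, borderZero_succ_succ, Pi.sub_apply, lowerArray]
  omega

theorem upperArray_zero_left (K : IsCornerSum m k) (j : ℕ) : upperArray k 0 j = 0 := by
  simp [upperArray, K.zero_left]

theorem upperArray_zero_right (K : IsCornerSum m k) (i : ℕ) : upperArray k i 0 = 0 := by
  simp [upperArray, K.zero_right]

theorem upperArray_of_le (K : IsCornerSum m k) {i j : ℕ} (hij : m ≤ i ∨ m ≤ j) :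
    upperArray k (i + 1) (j + 1) = min ((i + 1 : ℕ) : ℤ) ((j + 1 : ℕ) : ℤ) := by
  have := K.eq_min i j (by omega)
  have := K.eq_min (i + 1) (j + 1) (by omega)
  rw [upperArray_succ_succ]
  push_cast at *
  omega

theorem interlaces_sub_borderZero (K : IsCornerSum m k) {T : Finset (ℕ × ℕ)}
    (hT : T ⊆ cellsEq m k 1) : Interlaces (upperArray k - borderZero (indArray T)) k := by
  refine (interlaces_iff_succ K (fun j => by simp [upperArray_zero_left K])
    fun i => by simp [upperArray_zero_right K]).2 fun i j => ?_
  have := K.row i j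
  have := K.row (i + 1) j
  have := K.col i j
  have := K.col i (j + 1)
  simp only [Pi.sub_apply, borderZero_succ_succ, upperArray_succ_succ]
  rcases exists_indArray_eq_iff.1 ⟨T, hT, rfl⟩ i j with hij | ⟨hC, hij⟩
  · omega
  · have := (mem_cellsEq.1 hC).2
    rw [cornerDiff] at this
    omega

theorem isCornerSum_sub_borderZero (K : IsCornerSum m k) {T : Finset (ℕ × ℕ)}
    (hT : T ⊆ cellsEq m k 1) : IsCornerSum (m + 1) (upperArray k - borderZero (indArray T)) := by
  refine (interlaces_sub_borderZero K hT).isCornerSum_above fun i j hij => ?_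
  match i, j with
  | 0, j => simp [upperArray_zero_left K]
  | i + 1, 0 =>
    rw [Pi.sub_apply, Pi.sub_apply, upperArray_zero_right K, borderZero_zero_right]
    omega
  | i + 1, j + 1 =>
    have outside : (i, j) ∉ T := fun hc => by
      have := (mem_cellsEq.1 (hT hc)).1
      omega
    simp only [Pi.sub_apply, borderZero_succ_succ, indArray, if_neg outside, sub_zero]
    exact upperArray_of_le K (by omega)

theorem exists_eq_sub_borderZero (K : IsCornerSum m k) (H : IsCornerSum (m + 1) h)
    (hk : Interlaces h k) :
    ∃ T ⊆ cellsEq m k 1, upperArray k - borderZero (indArray T) = h := by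
  obtain ⟨T, hT, hd⟩ := (exists_indArray_eq_iff (C := cellsEq m k 1)
      (d := fun i j => upperArray k (i + 1) (j + 1) - h (i + 1) (j + 1))).2 fun i j => by
    by_cases hij : i < m ∧ j < m
    · have := (interlaces_iff_succ K H.zero_left H.zero_right).1 hk i j
      have := K.row i j
      have := K.row (i + 1) j
      have := K.col i j
      have := K.col i (j + 1)
      simp only [mem_cellsEq, cornerDiff, upperArray_succ_succ]
      omega
    · left
      rw [upperArray_of_le K (by omega), H.eq_min (i + 1) (j + 1) (by omega), sub_self]
  refine ⟨T, hT, sub_eq_iff_eq_add'.2 (sub_eq_iff_eq_add.1 ?_)⟩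
  rw [hd]
  exact eq_borderZero (fun j => by simp [upperArray_zero_left K, H.zero_left])
    (fun i => by simp [upperArray_zero_right K, H.zero_right]) fun _ _ => rfl

open Classical in
theorem sum_interlaces_below {M : Type*} [AddCommMonoid M] (H : IsCornerSum (m + 1) h)
    (f : (ℕ → ℕ → ℤ) → M) :
    ∑ k ∈ (cornerSums m).filter (Interlaces h), f k =
      ∑ T ∈ (cellsEq (m + 1) h (-1)).powerset, f (lowerArray h + indArray T) := by
  refine (sum_nbij (fun T => lowerArray h + indArray T) (fun T hT => ?_)
    (fun S _ T _ hST => indArray_injective (add_left_cancel hST)) (fun k hk => ?_)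
    fun _ _ => rfl).symm
  · have hk : Interlaces h (lowerArray h + indArray T) :=
      (interlaces_iff_sub_lowerArray H).2 <| by
        rw [add_sub_cancel_left]
        exact exists_indArray_eq_iff.1 ⟨T, mem_powerset.1 hT, rfl⟩
    exact mem_filter.2 ⟨mem_cornerSums.2 (hk.isCornerSum_below H), hk⟩
  · obtain ⟨T, hT, hd⟩ := exists_indArray_eq_iff.2
      ((interlaces_iff_sub_lowerArray H).1 (mem_filter.1 hk).2)
    exact ⟨T, mem_powerset.2 hT, by simp only [hd, add_sub_cancel]⟩

open Classical in
theorem sum_interlaces_above {M : Type*} [AddCommMonoid M] (K : IsCornerSum m k)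
    (f : (ℕ → ℕ → ℤ) → M) :
    ∑ h ∈ (cornerSums (m + 1)).filter (Interlaces · k), f h =
      ∑ T ∈ (cellsEq m k 1).powerset, f (upperArray k - borderZero (indArray T)) := by
  refine (sum_nbij (fun T => upperArray k - borderZero (indArray T)) (fun T hT => ?_)
    (fun S _ T _ hST => indArray_injective (borderZero_injective (sub_right_injective hST)))
    (fun h hh => ?_) fun _ _ => rfl).symm
  · have hT := mem_powerset.1 hT
    exact mem_filter.2
      ⟨mem_cornerSums.2 (isCornerSum_sub_borderZero K hT), interlaces_sub_borderZero K hT⟩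
  · obtain ⟨hh, hk⟩ := mem_filter.1 hh
    obtain ⟨T, hT, hd⟩ := exists_eq_sub_borderZero K (mem_cornerSums.1 hh) hk
    exact ⟨T, mem_powerset.2 hT, hd⟩

end Interlacing

section Monomials

variable {K : Type*} [Field K] {m : ℕ} {W V : ℕ → ℕ → K}

/-- The sum of an array over the square `[0, m)²`. Differences of these sums are the exponents
of `x`. -/
def squareSum (m : ℕ) (d : ℕ → ℕ → ℤ) : ℤ := ∑ i ∈ range m, ∑ j ∈ range m, d i j

/-- The Laurent monomial in the variables `W i j` whose exponents are the entries of the matrix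
with corner sums `h`. -/
def cornerMonomial (m : ℕ) (h : ℕ → ℕ → ℤ) (W : ℕ → ℕ → K) : K :=
  ∏ i ∈ range m, ∏ j ∈ range m, W i j ^ cornerDiff h i j

/-- The array without its first row and column. -/
def dropBorder (W : ℕ → ℕ → K) (i j : ℕ) : K := W (i + 1) (j + 1)

/-- The factor, including `x`, by which a weight changes when an array of corner sums is lowered
by one at `(i + 1, j + 1)`. -/
def plaquetteRatio (x : K) (W : ℕ → ℕ → K) (i j : ℕ) : K :=
  x * (W i (j + 1) * W (i + 1) j) / (W i j * W (i + 1) (j + 1))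

theorem squareSum_add (m : ℕ) (d e : ℕ → ℕ → ℤ) :
    squareSum m (d + e) = squareSum m d + squareSum m e := by
  simp only [squareSum, Pi.add_apply, sum_add_distrib]

theorem squareSum_neg (m : ℕ) (d : ℕ → ℕ → ℤ) : squareSum m (-d) = -squareSum m d := by
  simp only [squareSum, Pi.neg_apply, sum_neg_distrib]

theorem squareSum_borderZero (m : ℕ) (d : ℕ → ℕ → ℤ) :
    squareSum (m + 1) (borderZero d) = squareSum m d := by
  simp [squareSum, sum_range_succ', borderZero_succ_succ]

theorem squareSum_indArray {T : Finset (ℕ × ℕ)} (hT : T ⊆ range m ×ˢ range m) :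
    squareSum m (indArray T) = T.card := by
  simp only [squareSum, indArray]
  rw [← sum_product' (range m) (range m) fun i j => if (i, j) ∈ T then (1 : ℤ) else 0, sum_boole,
    filter_mem_eq_inter, inter_eq_right.2 hT]

theorem squareSum_sub_upperArray (m : ℕ) (k : ℕ → ℕ → ℤ) :
    squareSum (m + 1) (k - upperArray k) = squareSum m (lowerArray k - k) := by
  rw [upperArray, sub_add_cancel_left, squareSum_neg, squareSum_borderZero, ← squareSum_neg,
    neg_sub]

theorem cornerMonomial_congr {h : ℕ → ℕ → ℤ} (hWV : ∀ i < m, ∀ j < m, W i j = V i j) :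
    cornerMonomial m h W = cornerMonomial m h V :=
  prod_congr rfl fun i hi => prod_congr rfl fun j hj => by
    rw [hWV i (mem_range.1 hi) j (mem_range.1 hj)]

theorem cornerMonomial_mul (h : ℕ → ℕ → ℤ) (W V : ℕ → ℕ → K) :
    cornerMonomial m h (W * V) = cornerMonomial m h W * cornerMonomial m h V := by
  simp only [cornerMonomial, Pi.mul_apply, mul_zpow, prod_mul_distrib]

theorem cornerMonomial_inv (h : ℕ → ℕ → ℤ) (W : ℕ → ℕ → K) :
    cornerMonomial m h W⁻¹ = (cornerMonomial m h W)⁻¹ := by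
  simp only [cornerMonomial, Pi.inv_apply, inv_zpow, prod_inv_distrib]

theorem cornerMonomial_add (h k : ℕ → ℕ → ℤ) (hW : ∀ i j, W i j ≠ 0) :
    cornerMonomial m (h + k) W = cornerMonomial m h W * cornerMonomial m k W := by
  simp only [cornerMonomial, ← prod_mul_distrib, cornerDiff_add]
  exact prod_congr rfl fun i _ => prod_congr rfl fun j _ => zpow_add₀ (hW i j) _ _

theorem cornerMonomial_sub (h k : ℕ → ℕ → ℤ) (hW : ∀ i j, W i j ≠ 0) :
    cornerMonomial m (h - k) W = cornerMonomial m h W / cornerMonomial m k W := by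
  simp only [cornerMonomial, ← prod_div_distrib, cornerDiff_sub]
  exact prod_congr rfl fun i _ => prod_congr rfl fun j _ => zpow_sub₀ (hW i j) _ _

theorem cornerMonomial_borderZero {d : ℕ → ℕ → ℤ} (left : ∀ j, d 0 j = 0) (right : ∀ i, d i 0 = 0)
    (W : ℕ → ℕ → K) :
    cornerMonomial (m + 1) (borderZero d) W = cornerMonomial m d (dropBorder W) := by
  have top (j : ℕ) : cornerDiff (borderZero d) 0 j = 0 := by
    cases j <;> simp [cornerDiff, borderZero_succ_succ, left]
  have side (i : ℕ) : cornerDiff (borderZero d) i 0 = 0 := by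
    cases i <;> simp [cornerDiff, borderZero_succ_succ, right]
  have inner (i j : ℕ) : cornerDiff (borderZero d) (i + 1) (j + 1) = cornerDiff d i j := rfl
  simp [cornerMonomial, prod_range_succ', top, side, inner, dropBorder]

theorem prod_prod_zpow_ite {a b : ℕ} (ha : a < m) (hb : b < m) (W : ℕ → ℕ → K) :
    ∏ i ∈ range m, ∏ j ∈ range m, W i j ^ (if i = a ∧ j = b then (1 : ℤ) else 0) = W a b := by
  rw [prod_eq_single_of_mem a (mem_range.2 ha), prod_eq_single_of_mem b (mem_range.2 hb)]
  · simp
  · intro j _ hj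
    simp [hj]
  · intro i _ hi
    simp [hi]

theorem cornerMonomial_borderZero_singleton {i j : ℕ} (hi : i + 1 < m) (hj : j + 1 < m)
    (hW : ∀ i j, W i j ≠ 0) :
    cornerMonomial m (borderZero (indArray {(i, j)})) W =
      W i j * W (i + 1) (j + 1) / (W i (j + 1) * W (i + 1) j) := by
  have single : borderZero (indArray {(i, j)}) = indArray {(i + 1, j + 1)} :=
    (eq_borderZero (by simp [indArray]) (by simp [indArray]) (by simp [indArray])).symm
  have diff (a b : ℕ) : cornerDiff (indArray {(i + 1, j + 1)}) a b =
      (if a = i ∧ b = j then 1 else 0) + (if a = i + 1 ∧ b = j + 1 then 1 else 0) -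
      ((if a = i + 1 ∧ b = j then 1 else 0) + (if a = i ∧ b = j + 1 then 1 else 0)) := by
    simp only [cornerDiff, indArray, mem_singleton, Prod.mk.injEq, add_left_inj]
    ring
  simp only [single, cornerMonomial, diff, zpow_sub₀ (hW _ _), zpow_add₀ (hW _ _),
    prod_mul_distrib, prod_div_distrib]
  rw [prod_prod_zpow_ite (by omega) (by omega), prod_prod_zpow_ite hi hj,
    prod_prod_zpow_ite hi (by omega), prod_prod_zpow_ite (by omega) hj, mul_comm (W (i + 1) j)]

theorem pow_card_div_cornerMonomial_borderZero {T : Finset (ℕ × ℕ)}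
    (hT : ∀ p ∈ T, p.1 + 1 < m ∧ p.2 + 1 < m) (hW : ∀ i j, W i j ≠ 0) (x : K) :
    x ^ T.card / cornerMonomial m (borderZero (indArray T)) W =
      ∏ p ∈ T, plaquetteRatio x W p.1 p.2 := by
  induction T using Finset.induction_on with
  | empty =>
    have : borderZero (indArray ∅) = 0 :=
      (eq_borderZero (by simp) (by simp) (by simp [indArray])).symm
    simp [this, cornerMonomial, cornerDiff]
  | insert p T hp ih =>
    obtain ⟨h1, h2⟩ := hT p (mem_insert_self _ _)
    rw [indArray_insert hp, borderZero_add, cornerMonomial_add _ _ hW, prod_insert hp,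
      card_insert_of_notMem hp, ← ih fun q hq => hT q (mem_insert_of_mem hq),
      ← Prod.mk.eta (p := p), cornerMonomial_borderZero_singleton h1 h2 hW, plaquetteRatio,
      pow_succ', mul_div_mul_comm, div_div_eq_mul_div]

theorem IsCornerSum.cornerMonomial_succ {h : ℕ → ℕ → ℤ} (H : IsCornerSum m h) (W : ℕ → ℕ → K) :
    cornerMonomial (m + 1) h W = cornerMonomial m h W * W m m := by
  have last : ∏ j ∈ range (m + 1), W m j ^ cornerDiff h m j = W m m := by
    rw [prod_eq_single_of_mem m (self_mem_range_succ m) fun j _ hj => by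
      rw [H.cornerDiff_of_le (Or.inl le_rfl), if_neg hj.symm, zpow_zero],
      H.cornerDiff_of_le (Or.inl le_rfl), if_pos rfl, zpow_one]
  rw [cornerMonomial, prod_range_succ, last, cornerMonomial]
  congr 1
  refine prod_congr rfl fun i hi => ?_
  rw [prod_range_succ, H.cornerDiff_of_le (Or.inr le_rfl), if_neg (mem_range.1 hi).ne, zpow_zero,
    mul_one]

theorem IsCornerSum.cornerMonomial_mul_prod_cellsEq {k : ℕ → ℕ → ℤ} (H : IsCornerSum m k)
    (hW : ∀ i < m, ∀ j < m, W i j ≠ 0) :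
    cornerMonomial m k W * ∏ p ∈ cellsEq m k (-1), W p.1 p.2 =
      ∏ p ∈ cellsEq m k 1, W p.1 p.2 := by
  rw [cornerMonomial, ← prod_product' (range m) (range m) fun i j => W i j ^ cornerDiff k i j]
  simp only [cellsEq]
  rw [prod_filter, prod_filter, ← prod_mul_distrib]
  refine prod_congr rfl fun p hp => ?_
  rw [mem_product, mem_range, mem_range] at hp
  rcases H.cornerDiff_mem p.1 p.2 with h | h | h
  · simp [h, hW p.1 hp.1 p.2 hp.2]
  · simp [h]
  · simp [h]

theorem IsCornerSum.cornerMonomial_upperArray {k : ℕ → ℕ → ℤ} (H : IsCornerSum (m + 1) k)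
    (hW : ∀ i j, W i j ≠ 0) :
    cornerMonomial (m + 2) (upperArray k) W =
      cornerMonomial (m + 1) k (W * dropBorder W) /
        cornerMonomial m (lowerArray k) (dropBorder W) := by
  have L := isCornerSum_lowerArray H
  have hW' : ∀ i j, dropBorder W i j ≠ 0 := fun i j => hW _ _
  have corner : dropBorder W m m = W (m + 1) (m + 1) := rfl
  rw [upperArray, cornerMonomial_add _ _ hW, H.cornerMonomial_succ, cornerMonomial_borderZero
    (fun j => by simp [H.zero_left, L.zero_left]) (fun i => by simp [H.zero_right, L.zero_right]),
    cornerMonomial_sub _ _ hW', L.cornerMonomial_succ, cornerMonomial_mul, corner, mul_div_assoc',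
    mul_right_comm, mul_div_mul_right _ _ (hW _ _)]

end Monomials

section Condensation

variable {K : Type*} [Field K] {x : K} {m : ℕ} {h k : ℕ → ℕ → ℤ} {X W V : ℕ → ℕ → K}

open Classical in
/-- The weighted sum over the arrays of size `m` that `h` interlaces. -/
noncomputable def lowerSum (x : K) (m : ℕ) (h : ℕ → ℕ → ℤ) (V : ℕ → ℕ → K) : K :=
  ∑ k ∈ (cornerSums m).filter (Interlaces h),
    x ^ squareSum (m + 1) (k - h) / cornerMonomial m k V

open Classical in
/-- The weighted sum over the arrays of size `m + 1` that interlace `k`. -/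
noncomputable def upperSum (x : K) (m : ℕ) (k : ℕ → ℕ → ℤ) (W : ℕ → ℕ → K) : K :=
  ∑ h ∈ (cornerSums (m + 1)).filter (Interlaces · k),
    x ^ squareSum (m + 1) (k - h) * cornerMonomial (m + 1) h W

/-- The partition function of pairs of interlacing corner-sum arrays. The larger one, of size
`m + 1`, is weighted by its monomial in `X`, the smaller one by the inverse of its monomial in
`dropBorder W`. -/
noncomputable def layerSum (x : K) (m : ℕ) (X W : ℕ → ℕ → K) : K :=
  ∑ k ∈ cornerSums (m + 1), cornerMonomial (m + 1) k X * lowerSum x m k (dropBorder W)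

theorem lowerSum_eq (hx : x ≠ 0) (H : IsCornerSum (m + 1) h) (hW : ∀ i j, W i j ≠ 0) :
    lowerSum x m h (dropBorder W) =
      x ^ squareSum (m + 1) (lowerArray h - h) /
          cornerMonomial m (lowerArray h) (dropBorder W) *
        ∏ p ∈ cellsEq (m + 1) h (-1), (1 + plaquetteRatio x W p.1 p.2) := by
  rw [lowerSum, sum_interlaces_below H, prod_one_add, mul_sum]
  refine sum_congr rfl fun T hT => ?_
  have hT := mem_powerset.1 hT
  have interior (i j : ℕ) (hij : (i, j) ∈ T) := H.interior_of_cornerDiff_eq_neg_one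
    (mem_cellsEq.1 (hT hij)).2
  have hT' (p) (hp : p ∈ T) : p.1 + 1 < m + 1 ∧ p.2 + 1 < m + 1 := by
    have := interior p.1 p.2 hp
    omega
  have hW' (i j : ℕ) : dropBorder W i j ≠ 0 := hW _ _
  rw [← pow_card_div_cornerMonomial_borderZero hT' hW, add_sub_right_comm, squareSum_add,
    squareSum_indArray (hT.trans (filter_subset _ _)), zpow_add₀ hx, zpow_natCast,
    cornerMonomial_add _ _ hW', mul_div_mul_comm, cornerMonomial_borderZero]
  · exact fun j => if_neg fun hc => by have := interior 0 j hc; omega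
  · exact fun i => if_neg fun hc => by have := interior i 0 hc; omega

theorem upperSum_eq (hx : x ≠ 0) (H : IsCornerSum m k) (hW : ∀ i j, W i j ≠ 0) :
    upperSum x m k W =
      x ^ squareSum (m + 1) (k - upperArray k) * cornerMonomial (m + 1) (upperArray k) W *
        ∏ p ∈ cellsEq m k 1, (1 + plaquetteRatio x W p.1 p.2) := by
  rw [upperSum, sum_interlaces_above H, prod_one_add, mul_sum]
  refine sum_congr rfl fun T hT => ?_
  have hT := mem_powerset.1 hT
  have hT' (p) (hp : p ∈ T) : p.1 + 1 < m + 1 ∧ p.2 + 1 < m + 1 := by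
    have := (mem_cellsEq.1 (hT hp)).1
    omega
  rw [← pow_card_div_cornerMonomial_borderZero hT' hW, sub_sub_eq_add_sub, add_sub_right_comm,
    squareSum_add, squareSum_borderZero, squareSum_indArray (hT.trans (filter_subset _ _)),
    cornerMonomial_sub _ _ hW, zpow_add₀ hx, zpow_natCast, mul_div_assoc', mul_div_assoc',
    mul_right_comm]

theorem cornerMonomial_mul_lowerSum (hx : x ≠ 0) (H : IsCornerSum (m + 1) k)
    (hX : ∀ i j, X i j ≠ 0) (hW : ∀ i j, W i j ≠ 0) (hV : ∀ i j, V i j ≠ 0)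
    (hrec : ∀ i < m + 1, ∀ j < m + 1, X i j * V i j =
      W i j * W (i + 1) (j + 1) + x * (W i (j + 1) * W (i + 1) j)) :
    cornerMonomial (m + 1) k X * lowerSum x m k (dropBorder W) =
      upperSum x (m + 1) k W / cornerMonomial (m + 1) k V := by
  set R : ℕ → ℕ → K := fun i j => 1 + plaquetteRatio x W i j with hR
  have factor : ∀ i < m + 1, ∀ j < m + 1, X i j = (V⁻¹ * (W * dropBorder W) * R) i j := by
    intro i hi j hj
    have := hV i j
    have := hW i j
    have := hW (i + 1) (j + 1)
    simp only [hR, Pi.mul_apply, Pi.inv_apply, dropBorder, plaquetteRatio]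
    field_simp
    linear_combination hrec i hi j hj
  have hR0 : ∀ i < m + 1, ∀ j < m + 1, R i j ≠ 0 := fun i hi j hj =>
    right_ne_zero_of_mul (factor i hi j hj ▸ hX i j)
  rw [cornerMonomial_congr factor, cornerMonomial_mul, cornerMonomial_mul, cornerMonomial_inv,
    lowerSum_eq hx H hW, upperSum_eq hx H hW, squareSum_sub_upperArray,
    H.cornerMonomial_upperArray hW, ← H.cornerMonomial_mul_prod_cellsEq hR0]
  ring

theorem layerSum_succ (hx : x ≠ 0) (hX : ∀ i j, X i j ≠ 0)
    (hW : ∀ i j, W i j ≠ 0) (hV : ∀ i j, V i j ≠ 0)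
    (hrec : ∀ i < m + 1, ∀ j < m + 1, X i j * V (i + 1) (j + 1) =
      W i j * W (i + 1) (j + 1) + x * (W i (j + 1) * W (i + 1) j)) :
    layerSum x m X W = layerSum x (m + 1) W V := by
  classical
  rw [layerSum, sum_congr rfl fun k hk => cornerMonomial_mul_lowerSum (V := dropBorder V) hx
    (mem_cornerSums.1 hk) hX hW (fun i j => hV _ _) hrec]
  simp only [layerSum, upperSum, lowerSum, mul_sum, sum_div]
  rw [sum_comm' (t' := cornerSums (m + 1 + 1))
    (s' := fun h => (cornerSums (m + 1)).filter (Interlaces h))]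
  · exact sum_congr rfl fun h _ => sum_congr (by congr) fun k _ => by ring
  · intro k h
    simp only [mem_filter]
    tauto

theorem layerSum_zero (x : K) (X W : ℕ → ℕ → K) : layerSum x 0 X W = X 0 0 := by
  classical
  have interlaces : Interlaces (fun i j : ℕ => min (i : ℤ) (j : ℤ))
      fun i j : ℕ => min (i : ℤ) (j : ℤ) := fun i j => by
    push_cast
    omega
  rw [layerSum, zero_add, cornerSums_eq_singleton le_rfl, sum_singleton, lowerSum,
    cornerSums_eq_singleton zero_le_one, filter_singleton, if_pos interlaces, sum_singleton]
  simp [cornerMonomial, cornerDiff, squareSum]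

theorem layerSum_eq_apex (hx : x ≠ 0) {Y : ℕ → ℕ → ℕ → K} (hY : ∀ m i j, Y m i j ≠ 0)
    {n : ℕ} (hrec : ∀ m < n, ∀ i ≤ m, ∀ j ≤ m, Y m i j * Y (m + 2) (i + 1) (j + 1) =
      Y (m + 1) i j * Y (m + 1) (i + 1) (j + 1) +
        x * (Y (m + 1) i (j + 1) * Y (m + 1) (i + 1) j)) :
    layerSum x n (Y n) (Y (n + 1)) = Y 0 0 0 := by
  induction n with
  | zero => exact layerSum_zero x _ _
  | succ n ih =>
    rw [← ih fun m hm => hrec m (by omega)]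
    refine (layerSum_succ hx (hY n) (hY _) (hY _) fun i hi j hj => ?_).symm
    exact hrec n (by omega) i (by omega) j (by omega)

end Condensation

section Encoding

variable {n : ℕ} {A : Fin n → Fin n → ℤ} {h : ℕ → ℕ → ℤ}

/-- The extension of a square matrix by the identity matrix. -/
def extendMat (A : Fin n → Fin n → ℤ) (i j : ℕ) : ℤ :=
  if h : i < n ∧ j < n then A ⟨i, h.1⟩ ⟨j, h.2⟩ else if i = j then 1 else 0

/-- The corner sums of a square matrix extended by the identity matrix. -/
def cornerArray (A : Fin n → Fin n → ℤ) (i j : ℕ) : ℤ :=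
  ∑ a ∈ range i, ∑ b ∈ range j, extendMat A a b

/-- The matrix of size `n` with corner sums `h`. -/
def cornerMatrix (n : ℕ) (h : ℕ → ℕ → ℤ) (i j : Fin n) : ℤ := cornerDiff h i j

theorem extendMat_coe (A : Fin n → Fin n → ℤ) (i j : Fin n) : extendMat A i j = A i j := by
  simp [extendMat]

theorem extendMat_swap (A : Fin n → Fin n → ℤ) (i j : ℕ) :
    extendMat (fun i j => A j i) i j = extendMat A j i := by
  simp only [extendMat, and_comm, eq_comm]

theorem extendMat_of_le (A : Fin n → Fin n → ℤ) {i j : ℕ} (hij : n ≤ i ∨ n ≤ j) :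
    extendMat A i j = if i = j then 1 else 0 := by
  rw [extendMat, dif_neg (by omega)]

theorem cornerDiff_cornerArray (A : Fin n → Fin n → ℤ) (i j : ℕ) :
    cornerDiff (cornerArray A) i j = extendMat A i j := by
  simp only [cornerDiff, cornerArray, sum_range_succ, sum_add_distrib]
  ring

theorem cornerMatrix_cornerArray (A : Fin n → Fin n → ℤ) : cornerMatrix n (cornerArray A) = A := by
  funext i j
  rw [cornerMatrix, cornerDiff_cornerArray, extendMat_coe]

theorem cornerArray_swap (A : Fin n → Fin n → ℤ) (i j : ℕ) :
    cornerArray (fun i j => A j i) i j = cornerArray A j i := by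
  simp only [cornerArray, extendMat_swap]
  exact sum_comm

theorem sum_filter_le_fin {M : Type*} [AddCommMonoid M] (g : ℕ → M) (j : Fin n) :
    ∑ j' ∈ univ.filter (fun j' : Fin n => j' ≤ j), g j' = ∑ b ∈ range (j + 1), g b := by
  rw [filter_ge_eq_Iic, Nat.range_succ_eq_Iic, ← Fin.map_valEmbedding_Iic, sum_map]
  rfl

namespace IsASM

theorem swap (hA : IsASM A) : IsASM fun i j => A j i :=
  ⟨fun i j => hA.1 j i, fun i j => hA.2.2.1 j i, fun i j => hA.2.1 j i, hA.2.2.2.2, hA.2.2.2.1⟩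

theorem sum_range_extendMat_of_le (hA : IsASM A) (i : ℕ) {j : ℕ} (hij : n ≤ i ∨ n ≤ j) :
    ∑ b ∈ range j, extendMat A i b = if i < j then 1 else 0 := by
  by_cases hi : i < n
  · have hj : n ≤ j := by omega
    rw [if_pos (hi.trans_le hj)]
    induction j, hj using Nat.le_induction with
    | base =>
      rw [← hA.2.2.2.1 ⟨i, hi⟩, sum_range]
      exact sum_congr rfl fun b _ => extendMat_coe A ⟨i, hi⟩ b
    | succ j hj ih =>
      rw [sum_range_succ, ih (Or.inr hj), extendMat_of_le A (Or.inr hj), if_neg (by omega),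
        add_zero]
  · rw [sum_congr rfl fun b _ => extendMat_of_le A (j := b) (Or.inl (not_lt.1 hi))]
    simp

theorem sum_range_extendMat_mem (hA : IsASM A) (i j : ℕ) :
    ∑ b ∈ range j, extendMat A i b = 0 ∨ ∑ b ∈ range j, extendMat A i b = 1 := by
  by_cases hij : n ≤ i ∨ n ≤ j
  · rw [hA.sum_range_extendMat_of_le i hij]
    split_ifs <;> simp
  · cases j with
    | zero => simp
    | succ j =>
      have := hA.2.1 ⟨i, by omega⟩ ⟨j, by omega⟩
      simp only [← extendMat_coe A, sum_filter_le_fin (extendMat A i)] at this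
      exact this

theorem cornerArray_col (hA : IsASM A) (i j : ℕ) :
    cornerArray A i j ≤ cornerArray A (i + 1) j ∧
      cornerArray A (i + 1) j ≤ cornerArray A i j + 1 := by
  have := hA.sum_range_extendMat_mem i j
  simp only [cornerArray, sum_range_succ]
  omega

theorem cornerArray_of_le (hA : IsASM A) (i : ℕ) {j : ℕ} (hj : n ≤ j) :
    cornerArray A i j = min (i : ℤ) (j : ℤ) := by
  induction i with
  | zero => simp [cornerArray]
  | succ i ih =>
    rw [cornerArray, sum_range_succ, hA.sum_range_extendMat_of_le i (Or.inr hj), ← cornerArray, ih]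
    push_cast
    split_ifs <;> omega

theorem isCornerSum (hA : IsASM A) : IsCornerSum n (cornerArray A) := by
  refine ⟨fun i j hij => ?_, fun i j => ?_, hA.cornerArray_col⟩
  · rcases hij with rfl | rfl | hi | hj
    · simp [cornerArray]
    · simp [cornerArray]
    · rw [← cornerArray_swap A j i, hA.swap.cornerArray_of_le j hi, min_comm]
    · exact hA.cornerArray_of_le i hj
  · simpa only [cornerArray_swap] using hA.swap.cornerArray_col j i

end IsASM

namespace IsCornerSum

theorem cornerMatrix_row (H : IsCornerSum n h) (i j : Fin n) :
    (∑ j' ∈ univ.filter (fun j' : Fin n => j' ≤ j), cornerMatrix n h i j') = 0 ∨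
      (∑ j' ∈ univ.filter (fun j' : Fin n => j' ≤ j), cornerMatrix n h i j') = 1 := by
  simp only [cornerMatrix, sum_filter_le_fin (cornerDiff h i), H.sum_row]
  have := H.col i (j + 1)
  omega

theorem sum_cornerMatrix (H : IsCornerSum n h) (i : Fin n) : ∑ j, cornerMatrix n h i j = 1 := by
  have := i.2
  simp only [cornerMatrix]
  rw [Fin.sum_univ_eq_sum_range (cornerDiff h i), H.sum_row, H.eq_min (i + 1) n (by simp),
    H.eq_min i n (by simp)]
  push_cast
  omega

theorem isASM_cornerMatrix (H : IsCornerSum n h) : IsASM (cornerMatrix n h) := by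
  have swap (i j : Fin n) : cornerMatrix n (fun i j => h j i) i j = cornerMatrix n h j i :=
    cornerDiff_swap h i j
  refine ⟨fun i j => H.cornerDiff_mem i j, H.cornerMatrix_row, fun i j => ?_, H.sum_cornerMatrix,
    fun j => ?_⟩
  · simpa only [swap] using H.swap.cornerMatrix_row j i
  · simpa only [swap] using H.swap.sum_cornerMatrix j

theorem extendMat_cornerMatrix (H : IsCornerSum n h) (i j : ℕ) :
    extendMat (cornerMatrix n h) i j = cornerDiff h i j := by
  by_cases hij : i < n ∧ j < n
  · exact dif_pos hij
  · rw [extendMat_of_le _ (by omega), H.cornerDiff_of_le (by omega)]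

theorem cornerArray_cornerMatrix (H : IsCornerSum n h) : cornerArray (cornerMatrix n h) = h := by
  funext i j
  simp only [cornerArray, H.extendMat_cornerMatrix, H.sum_sum_cornerDiff]

end IsCornerSum

theorem asmMat_injective : Function.Injective (asmMat (n := n)) := fun e e' hee' => by
  funext i j
  have := congrFun (congrFun hee' i) j
  simp only [asmMat] at this
  omega

theorem exists_asmMat_eq (hA : ∀ i j, A i j = -1 ∨ A i j = 0 ∨ A i j = 1) :
    ∃ e, asmMat e = A := by
  have code (i j) : ∃ c : Fin 3, (c : ℤ) - 1 = A i j := by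
    rcases hA i j with hij | hij | hij
    · exact ⟨0, by simp [hij]⟩
    · exact ⟨1, by simp [hij]⟩
    · exact ⟨2, by simp [hij]⟩
  choose e he using code
  exact ⟨e, funext₂ he⟩

open Classical in
theorem sum_isASM_eq_sum_cornerSums {M : Type*} [AddCommMonoid M]
    (f : (Fin n → Fin n → ℤ) → M) :
    (∑ e : Fin n → Fin n → Fin 3, if IsASM (asmMat e) then f (asmMat e) else 0) =
      ∑ h ∈ cornerSums n, f (cornerMatrix n h) := by
  rw [← sum_filter]
  refine sum_nbij (fun e => cornerArray (asmMat e)) (fun e he => ?_) (fun e _ e' _ hee' => ?_)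
    (fun h hh => ?_) fun e _ => by rw [cornerMatrix_cornerArray]
  · exact mem_cornerSums.2 (mem_filter.1 he).2.isCornerSum
  · have := congrArg (cornerMatrix n) hee'
    simp only [cornerMatrix_cornerArray] at this
    exact asmMat_injective this
  · have H := mem_cornerSums.1 hh
    obtain ⟨e, he⟩ := exists_asmMat_eq H.isASM_cornerMatrix.1
    exact ⟨e, by simp [he, H.isASM_cornerMatrix], by simp only [he, H.cornerArray_cornerMatrix]⟩

end Encoding

section Statistics

variable {n : ℕ} {h : ℕ → ℕ → ℤ}

namespace IsCornerSum

theorem sum_north_east (H : IsCornerSum n h) {p q : ℕ} (hp : p ≤ n) (hq : q ≤ n) :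
    (∑ i ∈ range n, ∑ j ∈ range n, if i < p ∧ q ≤ j then cornerDiff h i j else 0) =
      p - h p q := by
  have region : (range n ×ˢ range n).filter (fun a => a.1 < p ∧ q ≤ a.2) = range p ×ˢ Ico q n := by
    ext a
    simp only [mem_filter, mem_product, mem_range, mem_Ico]
    omega
  rw [← sum_product' (range n) (range n) fun i j => if i < p ∧ q ≤ j then cornerDiff h i j else 0,
    ← sum_filter, region, sum_product]
  simp only [sum_Ico_eq_sub _ hq, sum_sub_distrib, H.sum_sum_cornerDiff]
  rw [H.eq_min p n (by simp), min_eq_left (by exact_mod_cast hp)]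

theorem lowerArray_sub_self (H : IsCornerSum n h) (i j : ℕ) :
    lowerArray h i j - h i j = (h (i + 1) (j + 1) - h i (j + 1)) * (h i (j + 1) - h i j) := by
  have := H.row i j
  have := H.col i (j + 1)
  obtain hr | hr : h i (j + 1) = h i j ∨ h i (j + 1) = h i j + 1 := by omega
  · simp only [lowerArray, hr, sub_self, mul_zero]
    omega
  · rw [hr, add_sub_cancel_left, mul_one, lowerArray]
    omega

theorem sum_inversions_row (H : IsCornerSum n h) {i : ℕ} (hi : i < n) :
    ∑ j ∈ range n, (i - h i j) * cornerDiff h i j = ∑ j ∈ range n, (lowerArray h i j - h i j) := by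
  have telescope (j : ℕ) : (i - h i j) * cornerDiff h i j - (lowerArray h i j - h i j) =
      (h (i + 1) (j + 1) - h i (j + 1)) * (i - h i (j + 1)) -
        (h (i + 1) j - h i j) * (i - h i j) := by
    rw [H.lowerArray_sub_self, cornerDiff]
    ring
  rw [← sub_eq_zero, ← sum_sub_distrib, sum_congr rfl fun j _ => telescope j,
    sum_range_sub (fun j => (h (i + 1) j - h i j) * (i - h i j)), H.zero_right, H.zero_right,
    H.eq_min i n (by simp), min_eq_left (by exact_mod_cast hi.le)]
  ring

theorem sum_inversions (H : IsCornerSum n h) :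
    (∑ i ∈ range n, ∑ i' ∈ range n, ∑ j ∈ range n, ∑ j' ∈ range n,
      if i < i' ∧ j' ≤ j then cornerDiff h i j * cornerDiff h i' j' else 0) =
      squareSum n (lowerArray h - h) := by
  rw [sum_comm]
  refine sum_congr rfl fun i' hi' => ?_
  refine Eq.trans ?_ (H.sum_inversions_row (mem_range.1 hi'))
  rw [sum_congr rfl fun i _ => sum_comm, sum_comm]
  refine sum_congr rfl fun j' hj' => ?_
  rw [← H.sum_north_east (mem_range.1 hi').le (mem_range.1 hj').le]
  simp only [sum_mul, ite_mul, zero_mul]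

theorem nuASM_cornerMatrix (H : IsCornerSum n h) :
    (nuASM (cornerMatrix n h) : ℤ) = squareSum n (lowerArray h - h) := by
  have inversions := H.sum_inversions
  simp only [sum_range, Fin.val_fin_lt, Fin.val_fin_le] at inversions
  have nonneg : 0 ≤ squareSum n (lowerArray h - h) :=
    sum_nonneg fun i _ => sum_nonneg fun j _ => sub_nonneg.2 (le_max_left _ _)
  simp only [nuASM, cornerMatrix]
  rw [inversions, Int.toNat_of_nonneg nonneg]

theorem boundary_cornerMatrix (H : IsCornerSum n h) {i j : Fin n}
    (hij : (i : ℕ) = 0 ∨ (j : ℕ) = 0 ∨ (i : ℕ) + 1 = n ∨ (j : ℕ) + 1 = n) :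
    cornerMatrix n h i j = 0 ∨ cornerMatrix n h i j = 1 :=
  (H.cornerDiff_mem i j).resolve_left fun hc => by
    have := H.interior_of_cornerDiff_eq_neg_one hc
    omega

end IsCornerSum

theorem muASM_cornerMatrix (n : ℕ) (h : ℕ → ℕ → ℤ) :
    muASM (cornerMatrix n h) = (cellsEq n h (-1)).card := by
  rw [muASM, cellsEq, card_filter, card_filter, sum_product, Fintype.sum_prod_type]
  simp only [sum_range]
  rfl

theorem exists_eq_single_of_sum_eq_one {v : Fin n → ℤ} (h01 : ∀ j, v j = 0 ∨ v j = 1)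
    (hsum : ∑ j, v j = 1) : ∃ a, v = Pi.single a 1 := by
  have ite (j : Fin n) : v j = if v j = 1 then 1 else 0 := by
    rcases h01 j with hj | hj <;> simp [hj]
  have card : (univ.filter fun j => v j = 1).card = 1 := by
    rw [sum_congr rfl fun j _ => ite j, sum_boole] at hsum
    exact_mod_cast hsum
  obtain ⟨a, ha⟩ := card_eq_one.1 card
  refine ⟨a, funext fun j => ?_⟩
  rw [ite j, Pi.single_apply]
  simpa using congrArg (fun s => if j ∈ s then (1 : ℤ) else 0) ha

variable {K : Type*} [Field K]

theorem prod_zpow_single (f : Fin n → K) (a : Fin n) :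
    ∏ j, f j ^ (Pi.single a 1 : Fin n → ℤ) j = f a := by
  rw [prod_eq_single a (fun j _ hj => by simp [hj]) (by simp)]
  simp

theorem pow_card_zeros_before {v : Fin n → ℤ} (h01 : ∀ j, v j = 0 ∨ v j = 1)
    (hsum : ∑ j, v j = 1) (z : K) :
    z ^ (univ.filter fun j => v j = 0 ∧ ∃ j', j < j' ∧ v j' = 1).card =
      ∏ j : Fin n, (z ^ (j : ℕ)) ^ v j := by
  obtain ⟨a, rfl⟩ := exists_eq_single_of_sum_eq_one h01 hsum
  have before : (univ.filter fun j => (Pi.single a 1 : Fin n → ℤ) j = 0 ∧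
      ∃ j', j < j' ∧ (Pi.single a 1 : Fin n → ℤ) j' = 1) = Iio a := by
    ext j
    simpa [Pi.single_apply] using ne_of_lt
  rw [before, Fin.card_Iio, prod_zpow_single]

theorem pow_card_zeros_after {v : Fin n → ℤ} (h01 : ∀ j, v j = 0 ∨ v j = 1)
    (hsum : ∑ j, v j = 1) (z : K) :
    z ^ (univ.filter fun j => v j = 0 ∧ ∃ j', j' < j ∧ v j' = 1).card =
      ∏ j : Fin n, (z ^ (n - 1 - (j : ℕ))) ^ v j := by
  obtain ⟨a, rfl⟩ := exists_eq_single_of_sum_eq_one h01 hsum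
  have after : (univ.filter fun j => (Pi.single a 1 : Fin n → ℤ) j = 0 ∧
      ∃ j', j' < j ∧ (Pi.single a 1 : Fin n → ℤ) j' = 1) = Ioi a := by
    ext j
    simpa [Pi.single_apply] using ne_of_gt
  rw [after, Fin.card_Ioi, prod_zpow_single]

/-- The weights of the positions in a matrix of size `N + 1` that record the quadruply-refined
statistics in the monomials `cornerMonomial`. -/
def boundaryWeight (N : ℕ) (z1 z2 z3 z4 : K) (i j : ℕ) : K :=
  (if i = 0 then z1 ^ j else 1) * (if j = N then z2 ^ (N - i) else 1) *
    (if i = N then z3 ^ (N - j) else 1) * (if j = 0 then z4 ^ i else 1)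

theorem prod_prod_ite_zpow {c : ℕ} (hc : c < n) (f : ℕ → K) (a : ℕ → ℕ → ℤ) :
    ∏ i ∈ range n, ∏ j ∈ range n, (if i = c then f j else 1) ^ a i j =
      ∏ j ∈ range n, f j ^ a c j := by
  rw [prod_eq_single_of_mem c (mem_range.2 hc) fun i _ hi => by simp [hi]]
  simp

theorem cornerMonomial_boundaryWeight {N : ℕ} (H : IsCornerSum (N + 1) h) (z1 z2 z3 z4 : K) :
    cornerMonomial (N + 1) h (boundaryWeight N z1 z2 z3 z4) =
      z1 ^ rhoT (cornerMatrix (N + 1) h) * z2 ^ rhoR (cornerMatrix (N + 1) h) *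
        z3 ^ rhoB (cornerMatrix (N + 1) h) * z4 ^ rhoL (cornerMatrix (N + 1) h) := by
  have hA := H.isASM_cornerMatrix
  have top : z1 ^ rhoT (cornerMatrix (N + 1) h) = _ :=
    pow_card_zeros_before (fun j => H.boundary_cornerMatrix (by simp)) (hA.2.2.2.1 0) z1
  have left : z4 ^ rhoL (cornerMatrix (N + 1) h) = _ :=
    pow_card_zeros_before (fun i => H.boundary_cornerMatrix (by simp)) (hA.2.2.2.2 0) z4
  have bottom : z3 ^ rhoB (cornerMatrix (N + 1) h) = _ :=
    pow_card_zeros_after (fun j => H.boundary_cornerMatrix (by simp)) (hA.2.2.2.1 (Fin.last N)) z3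
  have right : z2 ^ rhoR (cornerMatrix (N + 1) h) = _ :=
    pow_card_zeros_after (fun i => H.boundary_cornerMatrix (by simp)) (hA.2.2.2.2 (Fin.last N)) z2
  rw [top, left, bottom, right]
  simp only [cornerMonomial, boundaryWeight, mul_zpow, prod_mul_distrib]
  rw [prod_prod_ite_zpow N.succ_pos, prod_prod_ite_zpow N.lt_succ_self,
    prod_comm (f := fun i j => (if j = N then z2 ^ (N - i) else 1) ^ _),
    prod_comm (f := fun i j => (if j = 0 then z4 ^ i else 1) ^ _),
    prod_prod_ite_zpow N.lt_succ_self (fun i => z2 ^ (N - i)) fun i j => cornerDiff _ j i,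
    prod_prod_ite_zpow N.succ_pos (fun i => z4 ^ i) fun i j => cornerDiff _ j i]
  simp only [prod_range, cornerMatrix, Fin.val_zero, Fin.val_last, Nat.add_sub_cancel]

theorem lowerSum_one {x : K} (hx : x ≠ 0) {m : ℕ} (H : IsCornerSum (m + 1) h) :
    lowerSum x m h (dropBorder fun _ _ => 1) =
      x ^ squareSum (m + 1) (lowerArray h - h) * (x + 1) ^ (cellsEq (m + 1) h (-1)).card := by
  rw [lowerSum_eq hx H fun _ _ => one_ne_zero]
  simp [dropBorder, cornerMonomial, plaquetteRatio, add_comm]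

theorem Zqua_eq_layerSum {x : K} (hx : x ≠ 0) (N : ℕ) (z1 z2 z3 z4 : K) :
    Zqua (N + 1) x (x + 1) z1 z2 z3 z4 =
      layerSum x N (boundaryWeight N z1 z2 z3 z4) fun _ _ => 1 := by
  rw [Zqua, layerSum, sum_isASM_eq_sum_cornerSums fun A => x ^ nuASM A * (x + 1) ^ muASM A *
    z1 ^ rhoT A * z2 ^ rhoR A * z3 ^ rhoB A * z4 ^ rhoL A]
  refine sum_congr rfl fun h hh => ?_
  have H := mem_cornerSums.1 hh
  rw [cornerMonomial_boundaryWeight H, lowerSum_one hx H, ← H.nuASM_cornerMatrix,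
    muASM_cornerMatrix, zpow_natCast]
  ring

end Statistics

section CondensedArrays

variable {K : Type*} [CommRing K] (x a b z z1 z2 z3 z4 : K)

/-- The weight in the interior of the condensed arrays, one level up. -/
def bulkWeight (x : K) (l : ℕ) : K := (x + 1) ^ l.choose 2

/-- The common factor of the weights on an edge of the condensed arrays. -/
def edgeWeight (x z : K) (l : ℕ) : K := (x * z + 1) ^ l * bulkWeight x l

/-- The weight at the north-west and south-east corners after `l` condensation steps, where `a`
and `b` are the variables of the adjacent edges. -/
def diagCorner (x a b : K) : ℕ → K
  | 0 => 1
  | l + 1 => (x + 1) ^ l * diagCorner x a b l +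
      x * (a * b) * ((x * a + 1) * (x * b + 1)) ^ l * bulkWeight x l

/-- The weight at the north-east and south-west corners of the array with last index `m` after
`l` condensation steps, where `a` and `b` are the variables of the adjacent edges. -/
def antiCorner (x a b : K) : ℕ → ℕ → K
  | 0, m => (a * b) ^ m
  | l + 1, m => x * (x + 1) ^ l * antiCorner x a b l (m + 1) +
      (a * b) ^ m * ((x * a + 1) * (x * b + 1)) ^ l * bulkWeight x l

/-- The array with last index `m` obtained by `l` condensation steps from the boundary weights. -/
def condensedArray (x z1 z2 z3 z4 : K) (l m i j : ℕ) : K :=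
  if i = 0 then
    if j = 0 then diagCorner x z4 z1 l
    else if j = m then antiCorner x z1 z2 l m
    else z1 ^ j * edgeWeight x z1 l
  else if i = m then
    if j = 0 then antiCorner x z3 z4 l m
    else if j = m then diagCorner x z2 z3 l
    else z3 ^ (m - j) * edgeWeight x z3 l
  else
    if j = 0 then z4 ^ i * edgeWeight x z4 l
    else if j = m then z2 ^ (m - i) * edgeWeight x z2 l
    else bulkWeight x (l + 1)

theorem bulkWeight_succ (l : ℕ) : bulkWeight x (l + 1) = bulkWeight x l * (x + 1) ^ l := by
  rw [bulkWeight, Nat.choose_succ_succ', Nat.choose_one_right, bulkWeight, ← pow_add,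
    add_comm l]

theorem edgeWeight_succ_mul (l : ℕ) :
    edgeWeight x z (l + 1) * bulkWeight x l =
      (x * z + 1) * edgeWeight x z l * bulkWeight x (l + 1) := by
  simp only [edgeWeight]
  ring

theorem diagCorner_succ_mul (l : ℕ) :
    diagCorner x a b (l + 1) * bulkWeight x l =
      diagCorner x a b l * bulkWeight x (l + 1) +
        x * (a * edgeWeight x a l * (b * edgeWeight x b l)) := by
  simp only [diagCorner, bulkWeight_succ, edgeWeight, mul_pow]
  ring

theorem antiCorner_succ_mul (l m : ℕ) :
    antiCorner x a b (l + 1) m * bulkWeight x l =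
      a ^ m * edgeWeight x a l * (b ^ m * edgeWeight x b l) +
        x * (antiCorner x a b l (m + 1) * bulkWeight x (l + 1)) := by
  simp only [antiCorner, bulkWeight_succ, edgeWeight, mul_pow]
  ring

theorem condensedArray_interior {l m i j : ℕ} (hi : i ≤ m) (hj : j ≤ m) :
    condensedArray x z1 z2 z3 z4 l (m + 2) (i + 1) (j + 1) = bulkWeight x (l + 1) := by
  rw [condensedArray, if_neg (by omega), if_neg (by omega), if_neg (by omega), if_neg (by omega)]

theorem condensedArray_step_north {l m j : ℕ} (hm : m ≠ 0) (hj : j ≤ m) :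
    condensedArray x z1 z2 z3 z4 (l + 1) m 0 j * bulkWeight x l =
      condensedArray x z1 z2 z3 z4 l (m + 1) 0 j *
          condensedArray x z1 z2 z3 z4 l (m + 1) 1 (j + 1) +
        x * (condensedArray x z1 z2 z3 z4 l (m + 1) 0 (j + 1) *
          condensedArray x z1 z2 z3 z4 l (m + 1) 1 j) := by
  have hj' : j ≠ m + 1 := by omega
  obtain rfl | hj0 := eq_or_ne j 0
  · simp only [condensedArray, ↓reduceIte, hm, diagCorner_succ_mul, one_ne_zero, Nat.right_eq_add,
      zero_add, pow_one]
    ring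
  obtain rfl | hjm := eq_or_ne j m
  · simp [condensedArray, hm, antiCorner_succ_mul]
  · simp only [condensedArray, ↓reduceIte, hj0, hjm, hj', hm, one_ne_zero, Nat.right_eq_add,
      Nat.add_eq_zero_iff, and_self, Nat.add_right_cancel_iff]
    linear_combination z1 ^ j * edgeWeight_succ_mul x z1 l

theorem condensedArray_step_south {l m j : ℕ} (hm : m ≠ 0) (hj : j ≤ m) :
    condensedArray x z1 z2 z3 z4 (l + 1) m m j * bulkWeight x l =
      condensedArray x z1 z2 z3 z4 l (m + 1) m j *
          condensedArray x z1 z2 z3 z4 l (m + 1) (m + 1) (j + 1) +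
        x * (condensedArray x z1 z2 z3 z4 l (m + 1) m (j + 1) *
          condensedArray x z1 z2 z3 z4 l (m + 1) (m + 1) j) := by
  have hj' : j ≠ m + 1 := by omega
  obtain rfl | hj0 := eq_or_ne j 0
  · simp only [condensedArray, ↓reduceIte, hm, antiCorner_succ_mul, one_ne_zero, Nat.left_eq_add,
      Nat.right_eq_add, Nat.add_eq_zero_iff, and_self, zero_add, Nat.add_sub_cancel]
    ring
  obtain rfl | hjm := eq_or_ne j m
  · simp only [condensedArray, ↓reduceIte, hm, diagCorner_succ_mul, one_ne_zero, Nat.left_eq_add,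
      Nat.add_eq_zero_iff, and_self, Nat.add_sub_cancel_left, pow_one]
    ring
  · simp only [condensedArray, ↓reduceIte, hm, hj0, hjm, hj', one_ne_zero, Nat.left_eq_add,
      Nat.add_eq_zero_iff, and_self, Nat.add_right_cancel_iff, Nat.add_sub_add_right,
      Nat.sub_add_comm hj]
    linear_combination z3 ^ (m - j) * edgeWeight_succ_mul x z3 l

theorem condensedArray_step_middle {l m i j : ℕ} (hi0 : i ≠ 0) (him : i < m) (hj : j ≤ m) :
    condensedArray x z1 z2 z3 z4 (l + 1) m i j * bulkWeight x l =
      condensedArray x z1 z2 z3 z4 l (m + 1) i j *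
          condensedArray x z1 z2 z3 z4 l (m + 1) (i + 1) (j + 1) +
        x * (condensedArray x z1 z2 z3 z4 l (m + 1) i (j + 1) *
          condensedArray x z1 z2 z3 z4 l (m + 1) (i + 1) j) := by
  have hm : m ≠ 0 := by omega
  have hi' : i ≠ m + 1 := by omega
  have hj' : j ≠ m + 1 := by omega
  obtain rfl | hj0 := eq_or_ne j 0
  · simp only [condensedArray, ↓reduceIte, hm, hi0, him.ne, hi', one_ne_zero, Nat.right_eq_add,
      Nat.add_eq_zero_iff, and_self, Nat.add_right_cancel_iff, zero_add]
    linear_combination z4 ^ i * edgeWeight_succ_mul x z4 l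
  obtain rfl | hjm := eq_or_ne j m
  · simp only [condensedArray, ↓reduceIte, hm, hi0, him.ne, hi', one_ne_zero, Nat.left_eq_add,
      Nat.add_eq_zero_iff, and_self, Nat.add_right_cancel_iff, Nat.add_sub_add_right,
      Nat.sub_add_comm him.le]
    linear_combination z2 ^ (j - i) * edgeWeight_succ_mul x z2 l
  · simp only [condensedArray, ↓reduceIte, hi0, him.ne, hi', hj0, hjm, hj', one_ne_zero,
      Nat.add_eq_zero_iff, and_self, Nat.add_right_cancel_iff, bulkWeight_succ]
    ring

theorem condensedArray_step {l m i j : ℕ} (hm : m ≠ 0) (hi : i ≤ m) (hj : j ≤ m) :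
    condensedArray x z1 z2 z3 z4 (l + 1) m i j * bulkWeight x l =
      condensedArray x z1 z2 z3 z4 l (m + 1) i j *
          condensedArray x z1 z2 z3 z4 l (m + 1) (i + 1) (j + 1) +
        x * (condensedArray x z1 z2 z3 z4 l (m + 1) i (j + 1) *
          condensedArray x z1 z2 z3 z4 l (m + 1) (i + 1) j) := by
  obtain rfl | hi0 := eq_or_ne i 0
  · exact condensedArray_step_north x z1 z2 z3 z4 hm hj
  obtain rfl | him := eq_or_ne i m
  · exact condensedArray_step_south x z1 z2 z3 z4 hm hj
  · exact condensedArray_step_middle x z1 z2 z3 z4 hi0 (by omega) hj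

theorem condensedArray_zero {K : Type*} [Field K] (x z1 z2 z3 z4 : K) {N : ℕ} (hN : N ≠ 0)
    (i j : ℕ) : condensedArray x z1 z2 z3 z4 0 N i j = boundaryWeight N z1 z2 z3 z4 i j := by
  simp only [condensedArray, boundaryWeight, edgeWeight, diagCorner, antiCorner, bulkWeight]
  split_ifs <;> simp_all [mul_pow]

end CondensedArrays

section PositiveValues

variable {K : Type*} [Field K] {x z1 z2 z3 z4 : K}

/-- The arrays to which condensation is applied: they end, at size `N + 1`, in the boundary weights
and, at size `1`, in the quadruply-refined generating function. -/
def condensedHierarchy (x z1 z2 z3 z4 : K) (N m i j : ℕ) : K :=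
  if N < m then 1
  else if m = 0 then
    (diagCorner x z4 z1 (N - 1) * diagCorner x z2 z3 (N - 1) +
      x * (antiCorner x z1 z2 (N - 1) 1 * antiCorner x z3 z4 (N - 1) 1)) / bulkWeight x (N - 1)
  else condensedArray x z1 z2 z3 z4 (N - m) m i j

theorem bulkWeight_ne_zero (hx : x + 1 ≠ 0) (l : ℕ) : bulkWeight x l ≠ 0 :=
  pow_ne_zero _ hx

theorem condensedHierarchy_interior (x z1 z2 z3 z4 : K) (l : ℕ) {m i j : ℕ} (hi : i ≤ m)
    (hj : j ≤ m) :
    condensedHierarchy x z1 z2 z3 z4 (m + 1 + l) (m + 2) (i + 1) (j + 1) = bulkWeight x l := by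
  cases l with
  | zero => simp [condensedHierarchy, bulkWeight]
  | succ l =>
    rw [condensedHierarchy, if_neg (by omega), if_neg (by omega),
      condensedArray_interior _ _ _ _ _ hi hj, show m + 1 + (l + 1) - (m + 2) = l by omega]

theorem condensedHierarchy_step (hx : x + 1 ≠ 0) (z1 z2 z3 z4 : K) {N m i j : ℕ} (hm : m < N)
    (hi : i ≤ m) (hj : j ≤ m) :
    condensedHierarchy x z1 z2 z3 z4 N m i j *
        condensedHierarchy x z1 z2 z3 z4 N (m + 2) (i + 1) (j + 1) =
      condensedHierarchy x z1 z2 z3 z4 N (m + 1) i j *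
          condensedHierarchy x z1 z2 z3 z4 N (m + 1) (i + 1) (j + 1) +
        x * (condensedHierarchy x z1 z2 z3 z4 N (m + 1) i (j + 1) *
          condensedHierarchy x z1 z2 z3 z4 N (m + 1) (i + 1) j) := by
  obtain ⟨l, rfl⟩ := Nat.exists_eq_add_of_le (Nat.succ_le_of_lt hm)
  have middle (i j) : condensedHierarchy x z1 z2 z3 z4 (m + 1 + l) (m + 1) i j =
      condensedArray x z1 z2 z3 z4 l (m + 1) i j := by
    rw [condensedHierarchy, if_neg (by omega), if_neg (by omega), Nat.add_sub_cancel_left]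
  rw [condensedHierarchy_interior x z1 z2 z3 z4 l hi hj, condensedHierarchy, if_neg (by omega)]
  simp only [middle]
  split_ifs with hm0
  · obtain ⟨rfl, rfl, rfl⟩ : m = 0 ∧ i = 0 ∧ j = 0 := by omega
    rw [zero_add, Nat.add_sub_cancel_left, div_mul_cancel₀ _ (bulkWeight_ne_zero hx l)]
    simp [condensedArray]
  · rw [show m + 1 + l - m = l + 1 by omega]
    exact condensedArray_step x z1 z2 z3 z4 hm0 hi hj

variable [LinearOrder K] [IsStrictOrderedRing K]

theorem diagCorner_pos {a b : K} (hx : 0 < x) (ha : 0 < a) (hb : 0 < b) (l : ℕ) :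
    0 < diagCorner x a b l := by
  induction l with
  | zero => exact one_pos
  | succ l ih => rw [diagCorner, bulkWeight]; positivity

theorem antiCorner_pos {a b : K} (hx : 0 < x) (ha : 0 < a) (hb : 0 < b) (l m : ℕ) :
    0 < antiCorner x a b l m := by
  induction l generalizing m with
  | zero => exact pow_pos (mul_pos ha hb) m
  | succ l ih => have := ih (m + 1); rw [antiCorner, bulkWeight]; positivity

theorem condensedArray_pos (hx : 0 < x) (h1 : 0 < z1) (h2 : 0 < z2) (h3 : 0 < z3) (h4 : 0 < z4)
    (l m i j : ℕ) : 0 < condensedArray x z1 z2 z3 z4 l m i j := by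
  have := diagCorner_pos hx h4 h1 l
  have := diagCorner_pos hx h2 h3 l
  have := antiCorner_pos hx h1 h2 l m
  have := antiCorner_pos hx h3 h4 l m
  rw [condensedArray]
  split_ifs <;> first | assumption | (simp only [edgeWeight, bulkWeight]; positivity)

theorem condensedHierarchy_ne_zero (hx : 0 < x) (h1 : 0 < z1) (h2 : 0 < z2) (h3 : 0 < z3)
    (h4 : 0 < z4) (N m i j : ℕ) : condensedHierarchy x z1 z2 z3 z4 N m i j ≠ 0 := by
  rw [condensedHierarchy]
  split_ifs
  · exact one_ne_zero
  · have := diagCorner_pos hx h4 h1 (N - 1)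
    have := diagCorner_pos hx h2 h3 (N - 1)
    have := antiCorner_pos hx h1 h2 (N - 1) 1
    have := antiCorner_pos hx h3 h4 (N - 1) 1
    have := bulkWeight_ne_zero (by positivity : x + 1 ≠ 0) (N - 1)
    positivity
  · exact (condensedArray_pos hx h1 h2 h3 h4 _ _ _ _).ne'

theorem bulkWeight_mul_Zqua (hx : 0 < x) (h1 : 0 < z1) (h2 : 0 < z2) (h3 : 0 < z3) (h4 : 0 < z4)
    (l : ℕ) :
    bulkWeight x l * Zqua (l + 2) x (x + 1) z1 z2 z3 z4 =
      diagCorner x z4 z1 l * diagCorner x z2 z3 l +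
        x * (antiCorner x z1 z2 l 1 * antiCorner x z3 z4 l 1) := by
  have hx1 : x + 1 ≠ 0 := by positivity
  have bottom : boundaryWeight (l + 1) z1 z2 z3 z4 =
      condensedHierarchy x z1 z2 z3 z4 (l + 1) (l + 1) := by
    funext i j
    rw [condensedHierarchy, if_neg (lt_irrefl _), if_neg l.succ_ne_zero, Nat.sub_self,
      condensedArray_zero x z1 z2 z3 z4 l.succ_ne_zero]
  have above : (fun _ _ => 1) = condensedHierarchy x z1 z2 z3 z4 (l + 1) (l + 2) := by
    funext i j
    rw [condensedHierarchy, if_pos (Nat.lt_succ_self _)]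
  rw [Zqua_eq_layerSum hx.ne', bottom, above, layerSum_eq_apex hx.ne'
    (condensedHierarchy_ne_zero hx h1 h2 h3 h4 (l + 1))
    fun m hm i hi j hj => condensedHierarchy_step hx1 z1 z2 z3 z4 hm hi hj]
  rw [condensedHierarchy, if_neg (by omega), if_pos rfl, Nat.add_sub_cancel,
    mul_div_cancel₀ _ (bulkWeight_ne_zero hx1 l)]

end PositiveValues

section ClosedForms

variable {K : Type*} [CommRing K] (x a b z1 z2 z3 z4 : K)

/-- The factor that clears the denominator of `diagCorner`. -/
def diagFactor (x a b : K) : K := x * a * b + a + b - 1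

/-- The factor that clears the denominator of `antiCorner`. -/
def antiFactor (x a b : K) : K := x * a * b - x * a - x * b - 1

/-- The binomial coefficient `k (k - 1) / 2`, which for negative `k` is not zero. -/
def intChooseTwo (k : ℤ) : ℕ := (k * (k - 1) / 2).toNat

/-- The right-hand side of the explicit formula, with exponents that make it valid for `2 ≤ n`. -/
def quaClosedForm (n : ℕ) (x z1 z2 z3 z4 : K) : K :=
  z1 * z2 * z3 * z4 * (x * z1 * z3 + 1) * (x * z2 * z4 + 1) *
      ((x * z1 + 1) * (x * z2 + 1) * (x * z3 + 1) * (x * z4 + 1)) ^ (n - 2) *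
      (x + 1) ^ intChooseTwo (n - 4)
  - ((z2 - 1) * (z3 - 1) * z4 * z1 * ((x * z4 + 1) * (x * z1 + 1)) ^ (n - 2) +
      (z4 - 1) * (z1 - 1) * z2 * z3 * ((x * z2 + 1) * (x * z3 + 1)) ^ (n - 2)) *
      antiFactor x z1 z2 * antiFactor x z3 z4 * (x + 1) ^ intChooseTwo (n - 3)
  - ((z3 - 1) * (z4 - 1) * z1 * z2 * (z3 * z4) ^ (n - 1) *
        ((x * z1 + 1) * (x * z2 + 1)) ^ (n - 2) +
      (z1 - 1) * (z2 - 1) * z3 * z4 * (z1 * z2) ^ (n - 1) *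
        ((x * z3 + 1) * (x * z4 + 1)) ^ (n - 2)) *
      diagFactor x z4 z1 * diagFactor x z2 z3 * x ^ n * (x + 1) ^ intChooseTwo (n - 3)
  + (z1 - 1) * (z2 - 1) * (z3 - 1) * (z4 - 1) *
      (antiFactor x z1 z2 * antiFactor x z3 z4 +
        diagFactor x z4 z1 * diagFactor x z2 z3 * (z1 * z2 * z3 * z4) ^ (n - 1) *
          x ^ (2 * n - 1)) *
      (x + 1) ^ intChooseTwo (n - 2)

theorem diagFactor_mul_diagCorner (l : ℕ) :
    (x + 1) ^ l * (diagFactor x a b * diagCorner x a b l) =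
      bulkWeight x l * (a * b * (x + 1) * ((x * a + 1) * (x * b + 1)) ^ l -
        (a - 1) * (b - 1) * (x + 1) ^ l) := by
  induction l with
  | zero =>
    simp only [diagFactor, diagCorner, bulkWeight, Nat.choose_zero_succ, pow_zero]
    ring
  | succ l ih =>
    have factor : (x + 1) + x * diagFactor x a b = (x * a + 1) * (x * b + 1) := by
      rw [diagFactor]
      ring
    simp only [diagCorner, bulkWeight_succ, pow_succ _ l, ← factor]
    rw [← factor] at ih
    linear_combination (x + 1) ^ l * (x + 1) * ih

theorem antiFactor_mul_antiCorner (l m : ℕ) :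
    (x + 1) ^ l * (antiFactor x a b * antiCorner x a b l m) =
      bulkWeight x l * (x ^ (l + 1) * (a * b) ^ (m + l) * ((a - 1) * (b - 1)) * (x + 1) ^ l -
        (x + 1) * (a * b) ^ m * ((x * a + 1) * (x * b + 1)) ^ l) := by
  induction l generalizing m with
  | zero =>
    simp only [antiFactor, antiCorner, bulkWeight, Nat.choose_zero_succ, pow_zero]
    ring
  | succ l ih =>
    have factor : x * (x + 1) * (a * b) - antiFactor x a b = (x * a + 1) * (x * b + 1) := by
      rw [antiFactor]
      ring
    have ih := ih (m + 1)
    rw [show m + 1 + l = m + (l + 1) by ring, ← factor] at ih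
    simp only [antiCorner, bulkWeight_succ, pow_succ _ l, ← factor]
    linear_combination x * ((x + 1) ^ l * (x + 1)) * ih

theorem antiFactor_mul_antiFactor_add :
    antiFactor x z1 z2 * antiFactor x z3 z4 + x * (diagFactor x z4 z1 * diagFactor x z2 z3) =
      (x + 1) * ((x * z1 * z3 + 1) * (x * z2 * z4 + 1)) := by
  simp only [antiFactor, diagFactor]
  ring

theorem two_mul_intChooseTwo (k : ℤ) : 2 * (intChooseTwo k : ℤ) = k * (k - 1) := by
  obtain ⟨c, hc⟩ : (2 : ℤ) ∣ k * (k - 1) := (Int.even_mul_pred_self k).two_dvd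
  have nonneg : 0 ≤ k * (k - 1) := by
    obtain hk | hk := le_or_gt k 0 <;> nlinarith
  rw [intChooseTwo, hc, Int.mul_ediv_cancel_left _ two_ne_zero, Int.toNat_of_nonneg (by omega)]

theorem intChooseTwo_natCast (l : ℕ) : intChooseTwo l = l.choose 2 := by
  have intPart : 2 * (intChooseTwo l : ℚ) = l * (l - 1) := mod_cast two_mul_intChooseTwo l
  have choose : (l.choose 2 : ℚ) = l * (l - 1) / 2 := Nat.cast_choose_two ℚ l
  exact_mod_cast (by linarith : (intChooseTwo l : ℚ) = l.choose 2)

theorem intChooseTwo_sub_natCast {n k : ℕ} (h : k ≤ n) :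
    intChooseTwo (n - k) = (n - k) * (n - (k + 1)) / 2 := by
  rw [← Nat.cast_sub h, intChooseTwo_natCast, Nat.choose_two_right, Nat.sub_sub]

theorem intChooseTwo_sub_natCast_add_mul (l k : ℕ) :
    intChooseTwo (l - k) + k * l = l.choose 2 + (k + 1).choose 2 := by
  have sub := two_mul_intChooseTwo (l - k)
  have left := two_mul_intChooseTwo l
  have right := two_mul_intChooseTwo (k + 1 : ℕ)
  rw [intChooseTwo_natCast] at left right
  push_cast at right
  zify
  linarith

theorem pow_mul_pow_intChooseTwo (l k : ℕ) :
    (x + 1) ^ (k * l) * (x + 1) ^ intChooseTwo ((l + 2 : ℕ) - (k + 2 : ℕ)) =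
      (x + 1) ^ (k + 1).choose 2 * bulkWeight x l := by
  rw [bulkWeight, ← pow_add, ← pow_add, Nat.cast_add, Nat.cast_add, add_sub_add_right_eq_sub,
    add_comm (k * l), intChooseTwo_sub_natCast_add_mul, add_comm (l.choose 2)]

theorem pow_mul_quaClosedForm (l : ℕ) :
    (x + 1) ^ (2 * l) * quaClosedForm (l + 2) x z1 z2 z3 z4 =
      bulkWeight x l *
        (antiFactor x z1 z2 * antiFactor x z3 z4 *
            ((z4 * z1 * (x + 1) * ((x * z4 + 1) * (x * z1 + 1)) ^ l -
                (z4 - 1) * (z1 - 1) * (x + 1) ^ l) *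
              (z2 * z3 * (x + 1) * ((x * z2 + 1) * (x * z3 + 1)) ^ l -
                (z2 - 1) * (z3 - 1) * (x + 1) ^ l)) +
          x * (diagFactor x z4 z1 * diagFactor x z2 z3 *
            ((x ^ (l + 1) * (z1 * z2) ^ (1 + l) * ((z1 - 1) * (z2 - 1)) * (x + 1) ^ l -
                (x + 1) * (z1 * z2) ^ 1 * ((x * z1 + 1) * (x * z2 + 1)) ^ l) *
              (x ^ (l + 1) * (z3 * z4) ^ (1 + l) * ((z3 - 1) * (z4 - 1)) * (x + 1) ^ l -
                (x + 1) * (z3 * z4) ^ 1 * ((x * z3 + 1) * (x * z4 + 1)) ^ l)))) := by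
  have pow_two : (x + 1) ^ intChooseTwo ((l + 2 : ℕ) - 2) = bulkWeight x l := by
    simpa using pow_mul_pow_intChooseTwo x l 0
  have pow_three : (x + 1) ^ l * (x + 1) ^ intChooseTwo ((l + 2 : ℕ) - 3) =
      (x + 1) * bulkWeight x l := by
    simpa using pow_mul_pow_intChooseTwo x l 1
  have pow_four : (x + 1) ^ (2 * l) * (x + 1) ^ intChooseTwo ((l + 2 : ℕ) - 4) =
      (x + 1) ^ 3 * bulkWeight x l := by
    simpa using pow_mul_pow_intChooseTwo x l 2
  simp only [quaClosedForm, pow_two, Nat.add_sub_cancel, mul_pow,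
    show l + 2 - 1 = 1 + l by omega, show 2 * (l + 2) - 1 = 2 * l + 3 by omega]
  linear_combination
    z1 * z2 * z3 * z4 * (x * z1 * z3 + 1) * (x * z2 * z4 + 1) *
      ((x * z1 + 1) ^ l * (x * z2 + 1) ^ l * (x * z3 + 1) ^ l * (x * z4 + 1) ^ l) * pow_four
    - ((z2 - 1) * (z3 - 1) * z4 * z1 * ((x * z4 + 1) ^ l * (x * z1 + 1) ^ l) +
        (z4 - 1) * (z1 - 1) * z2 * z3 * ((x * z2 + 1) ^ l * (x * z3 + 1) ^ l)) *
        antiFactor x z1 z2 * antiFactor x z3 z4 * (x + 1) ^ l * pow_three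
    - ((z3 - 1) * (z4 - 1) * z1 * z2 * (z3 * z4) ^ (1 + l) *
          ((x * z1 + 1) ^ l * (x * z2 + 1) ^ l) +
        (z1 - 1) * (z2 - 1) * z3 * z4 * (z1 * z2) ^ (1 + l) *
          ((x * z3 + 1) ^ l * (x * z4 + 1) ^ l)) *
        diagFactor x z4 z1 * diagFactor x z2 z3 * x ^ (l + 2) * (x + 1) ^ l * pow_three
    - z1 * z2 * z3 * z4 * (x + 1) ^ 2 * bulkWeight x l *
        ((x * z1 + 1) ^ l * (x * z2 + 1) ^ l * (x * z3 + 1) ^ l * (x * z4 + 1) ^ l) *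
        antiFactor_mul_antiFactor_add x z1 z2 z3 z4

end ClosedForms

section PositiveIdentity

variable {K : Type*} [Field K] [LinearOrder K] [IsStrictOrderedRing K] {x z1 z2 z3 z4 : K}

theorem factors_mul_Zqua_of_pos (hx : 0 < x) (h1 : 0 < z1) (h2 : 0 < z2) (h3 : 0 < z3)
    (h4 : 0 < z4) (l : ℕ) :
    diagFactor x z4 z1 * antiFactor x z1 z2 * diagFactor x z2 z3 * antiFactor x z3 z4 *
        Zqua (l + 2) x (x + 1) z1 z2 z3 z4 =
      quaClosedForm (l + 2) x z1 z2 z3 z4 := by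
  have hx1 : x + 1 ≠ 0 := by positivity
  apply mul_left_cancel₀ (mul_ne_zero (pow_ne_zero (2 * l) hx1) (bulkWeight_ne_zero hx1 l))
  calc _ = (x + 1) ^ (2 * l) * (diagFactor x z4 z1 * antiFactor x z1 z2 * diagFactor x z2 z3 *
          antiFactor x z3 z4) * (bulkWeight x l * Zqua (l + 2) x (x + 1) z1 z2 z3 z4) := by ring
    _ = antiFactor x z1 z2 * antiFactor x z3 z4 *
            (((x + 1) ^ l * (diagFactor x z4 z1 * diagCorner x z4 z1 l)) *
              ((x + 1) ^ l * (diagFactor x z2 z3 * diagCorner x z2 z3 l))) +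
          x * (diagFactor x z4 z1 * diagFactor x z2 z3 *
            (((x + 1) ^ l * (antiFactor x z1 z2 * antiCorner x z1 z2 l 1)) *
              ((x + 1) ^ l * (antiFactor x z3 z4 * antiCorner x z3 z4 l 1)))) := by
      rw [bulkWeight_mul_Zqua hx h1 h2 h3 h4]
      ring
    _ = bulkWeight x l * ((x + 1) ^ (2 * l) * quaClosedForm (l + 2) x z1 z2 z3 z4) := by
      simp only [diagFactor_mul_diagCorner, antiFactor_mul_antiCorner, pow_mul_quaClosedForm]
      generalize antiFactor x z1 z2 = f12, antiFactor x z3 z4 = f34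
      ring
    _ = _ := by ring

end PositiveIdentity

section Transfer

variable {F R S : Type*} [CommRing R] [CommRing S] [FunLike F R S] [RingHomClass F R S]

theorem map_Zqua (f : F) (n : ℕ) (x y z1 z2 z3 z4 : R) :
    f (Zqua n x y z1 z2 z3 z4) = Zqua n (f x) (f y) (f z1) (f z2) (f z3) (f z4) := by
  simp only [Zqua, map_sum, apply_ite f, map_mul, map_pow, map_zero]

theorem map_diagFactor (f : F) (x a b : R) :
    f (diagFactor x a b) = diagFactor (f x) (f a) (f b) := by
  simp only [diagFactor, map_add, map_sub, map_mul, map_one]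

theorem map_antiFactor (f : F) (x a b : R) :
    f (antiFactor x a b) = antiFactor (f x) (f a) (f b) := by
  simp only [antiFactor, map_sub, map_mul, map_one]

theorem map_quaClosedForm (f : F) (n : ℕ) (x z1 z2 z3 z4 : R) :
    f (quaClosedForm n x z1 z2 z3 z4) = quaClosedForm n (f x) (f z1) (f z2) (f z3) (f z4) := by
  simp only [quaClosedForm, map_diagFactor, map_antiFactor, map_add, map_sub, map_mul, map_pow,
    map_one]

open MvPolynomial in
theorem mvPolynomial_eq_of_aeval_pos {σ : Type*} {p q : MvPolynomial σ ℤ}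
    (h : ∀ v : σ → ℚ, (∀ i, 0 < v i) → aeval v p = aeval v q) : p = q := by
  apply map_injective (Int.castRingHom ℚ) Int.cast_injective
  refine funext_set (fun _ => Set.Ioi 0) (fun _ => Set.Ioi_infinite 0) fun v hv => ?_
  simpa [aeval_def, eval_map] using h v fun i => hv i (Set.mem_univ i)

open MvPolynomial in
theorem stmt17_general (x z1 z2 z3 z4 : R) {n : ℕ} (hn : 2 ≤ n) :
    diagFactor x z4 z1 * antiFactor x z1 z2 * diagFactor x z2 z3 * antiFactor x z3 z4 *
        Zqua n x (x + 1) z1 z2 z3 z4 =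
      quaClosedForm n x z1 z2 z3 z4 := by
  obtain ⟨l, rfl⟩ := Nat.exists_eq_add_of_le' hn
  have generic :
      diagFactor (X 0) (X 4) (X 1) * antiFactor (X 0) (X 1) (X 2) *
          diagFactor (X 0) (X 2) (X 3) * antiFactor (X 0) (X 3) (X 4) *
          Zqua (l + 2) (X 0) (X 0 + 1) (X 1) (X 2) (X 3) (X 4) =
        (quaClosedForm (l + 2) (X 0) (X 1) (X 2) (X 3) (X 4) : MvPolynomial (Fin 5) ℤ) :=
    mvPolynomial_eq_of_aeval_pos fun v hv => by
      simpa [map_diagFactor, map_antiFactor, map_Zqua, map_quaClosedForm] using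
        factors_mul_Zqua_of_pos (hv 0) (hv 1) (hv 2) (hv 3) (hv 4) l
  simpa [map_diagFactor, map_antiFactor, map_Zqua, map_quaClosedForm] using
    congrArg (aeval ![x, z1, z2, z3, z4]) generic

end Transfer

/-- Explicit formula for the quadruply-refined ASM generating function at
`y = x + 1`, stated for all values of the variables in any commutative ring,
equivalently as an identity of polynomials in `ℤ[x,z1,z2,z3,z4]`. -/
theorem stmt17 {R : Type*} [CommRing R] (x z1 z2 z3 z4 : R) (n : ℕ) (hn : 5 ≤ n) :
    (x * z4 * z1 + z4 + z1 - 1) * (x * z1 * z2 - x * z1 - x * z2 - 1) *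
        (x * z2 * z3 + z2 + z3 - 1) * (x * z3 * z4 - x * z3 - x * z4 - 1) *
        Zqua n x (x + 1) z1 z2 z3 z4 =
      z1 * z2 * z3 * z4 * (x * z1 * z3 + 1) * (x * z2 * z4 + 1) *
          ((x * z1 + 1) * (x * z2 + 1) * (x * z3 + 1) * (x * z4 + 1)) ^ (n - 2) *
          (x + 1) ^ ((n - 4) * (n - 5) / 2)
      - ((z2 - 1) * (z3 - 1) * z4 * z1 * ((x * z4 + 1) * (x * z1 + 1)) ^ (n - 2) +
         (z4 - 1) * (z1 - 1) * z2 * z3 * ((x * z2 + 1) * (x * z3 + 1)) ^ (n - 2)) *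
          (x * z1 * z2 - x * z1 - x * z2 - 1) * (x * z3 * z4 - x * z3 - x * z4 - 1) *
          (x + 1) ^ ((n - 3) * (n - 4) / 2)
      - ((z3 - 1) * (z4 - 1) * z1 * z2 * (z3 * z4) ^ (n - 1) *
            ((x * z1 + 1) * (x * z2 + 1)) ^ (n - 2) +
         (z1 - 1) * (z2 - 1) * z3 * z4 * (z1 * z2) ^ (n - 1) *
            ((x * z3 + 1) * (x * z4 + 1)) ^ (n - 2)) *
          (x * z4 * z1 + z4 + z1 - 1) * (x * z2 * z3 + z2 + z3 - 1) * x ^ n *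
          (x + 1) ^ ((n - 3) * (n - 4) / 2)
      + (z1 - 1) * (z2 - 1) * (z3 - 1) * (z4 - 1) *
          ((x * z1 * z2 - x * z1 - x * z2 - 1) * (x * z3 * z4 - x * z3 - x * z4 - 1) +
           (x * z4 * z1 + z4 + z1 - 1) * (x * z2 * z3 + z2 + z3 - 1) *
             (z1 * z2 * z3 * z4) ^ (n - 1) * x ^ (2 * n - 1)) *
          (x + 1) ^ ((n - 2) * (n - 3) / 2) := by
  have four : intChooseTwo (n - 4) = (n - 4) * (n - 5) / 2 :=
    intChooseTwo_sub_natCast (k := 4) (by omega)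
  have three : intChooseTwo (n - 3) = (n - 3) * (n - 4) / 2 :=
    intChooseTwo_sub_natCast (k := 3) (by omega)
  have two : intChooseTwo (n - 2) = (n - 2) * (n - 3) / 2 :=
    intChooseTwo_sub_natCast (k := 2) (by omega)
  rw [← four, ← three, ← two]
  exact stmt17_general x z1 z2 z3 z4 (by omega)
end
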